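/- arXiv:1506.03628 — 4 statements merged into one kernel-verified Lean document; each statement's English description precedes it below -/
import Mathlib

section
/- Let N ≥ 2 be an integer, ω > 0, and 1 < p < p_max, and let U : [0,∞) → (0,∞) be the radial profile of a ground-state profile u of (QLS) (so u(x) = U(|x|)). Suppose v : [0,∞) → ℝ is continuous, twice continuously differentiable on (0,∞), satisfies ∫₀^∞ (v(r)² + v'(r)²) r^{N−1} dr < ∞, and solves L₊,₀ v = 0 on (0,∞) (the radial linearized equation with angular eigenvalue λ₀ = 0). Then v is identically zero. -/
open MeasureTheory Real Filter Topology

noncomputable section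

/-- Partial derivative along the `i`-th coordinate direction. -/
def pd {N : ℕ} {F : Type*} [NormedAddCommGroup F] [NormedSpace ℝ F]
    (i : Fin N) (f : EuclideanSpace ℝ (Fin N) → F) (x : EuclideanSpace ℝ (Fin N)) : F :=
  fderiv ℝ f x (EuclideanSpace.single i 1)

/-- Euclidean Laplacian. -/
def lap {N : ℕ} {F : Type*} [NormedAddCommGroup F] [NormedSpace ℝ F]
    (f : EuclideanSpace ℝ (Fin N) → F) (x : EuclideanSpace ℝ (Fin N)) : F :=
  ∑ i : Fin N, pd i (pd i f) x

/-- Squared norm of the gradient of a real-valued function: `|∇f|²`. -/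
def gradsq {N : ℕ} (f : EuclideanSpace ℝ (Fin N) → ℝ) (x : EuclideanSpace ℝ (Fin N)) : ℝ :=
  ∑ i : Fin N, (pd i f x) ^ 2

/-- A ground-state profile of the quasilinear Schrödinger equation (QLS)
`-Δu - uΔ(u²) + ωu - u^p = 0` on `ℝ^N`: smooth, positive, radially symmetric with a
strictly decreasing positive profile, solves (QLS) pointwise, and decays
exponentially together with all its derivatives. -/
structure IsGroundState (N : ℕ) (ω p : ℝ) (u : EuclideanSpace ℝ (Fin N) → ℝ) : Prop where
  smooth : ContDiff ℝ (⊤ : ℕ∞) u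
  pos : ∀ x, 0 < u x
  radial : ∃ U : ℝ → ℝ, StrictAntiOn U (Set.Ici 0) ∧ (∀ r, 0 ≤ r → 0 < U r) ∧
      ∀ x, u x = U ‖x‖
  solves : ∀ x, -lap u x - u x * lap (fun y => (u y) ^ 2) x + ω * u x - (u x) ^ p = 0
  decay : ∀ k : ℕ, ∃ C > 0, ∃ δ > 0, ∀ x,
      ‖iteratedFDeriv ℝ k u x‖ ≤ C * Real.exp (-δ * ‖x‖)

/-- The linearized operator `L₊` around `u` (real-valued functions). -/
def Lplus {N : ℕ} (ω p : ℝ) (u η : EuclideanSpace ℝ (Fin N) → ℝ)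
    (x : EuclideanSpace ℝ (Fin N)) : ℝ :=
  -lap η x - 2 * u x * lap (fun y => u y * η y) x + ω * η x
    - (lap (fun y => (u y) ^ 2) x + p * u x ^ (p - 1)) * η x

/-- The linearized operator `L₋` around `u`. -/
def Lminus {N : ℕ} (ω p : ℝ) (u ζ : EuclideanSpace ℝ (Fin N) → ℝ)
    (x : EuclideanSpace ℝ (Fin N)) : ℝ :=
  -lap ζ x + ω * ζ x - (lap (fun y => (u y) ^ 2) x + u x ^ (p - 1)) * ζ x

/-- Radial Laplacian `Δ_r f (r) = f''(r) + ((N-1)/r) f'(r)`. -/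
def lapRad (N : ℕ) (f : ℝ → ℝ) (r : ℝ) : ℝ :=
  deriv (deriv f) r + ((N : ℝ) - 1) / r * deriv f r

/-- The radial linearized operator `L₊,ₖ` with angular eigenvalue `λ_k = k(N+k-2)`. -/
def LplusRad (N : ℕ) (ω p : ℝ) (U : ℝ → ℝ) (k : ℕ) (v : ℝ → ℝ) (r : ℝ) : ℝ :=
  -(1 + 2 * U r ^ 2) *
      (deriv (deriv v) r + ((N : ℝ) - 1) / r * deriv v r
        - (k : ℝ) * ((N : ℝ) + (k : ℝ) - 2) / r ^ 2 * v r)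
    - 4 * U r * deriv U r * deriv v r + ω * v r
    - (2 * U r * lapRad N U r + lapRad N (fun s => U s ^ 2) r + p * U r ^ (p - 1)) * v r

/-- The radial linearized operator `L₋,ₖ` with angular eigenvalue `λ_k = k(N+k-2)`. -/
def LminusRad (N : ℕ) (ω p : ℝ) (U : ℝ → ℝ) (k : ℕ) (v : ℝ → ℝ) (r : ℝ) : ℝ :=
  -deriv (deriv v) r - ((N : ℝ) - 1) / r * deriv v r
    + (k : ℝ) * ((N : ℝ) + (k : ℝ) - 2) / r ^ 2 * v r + ω * v r
    - (lapRad N (fun s => U s ^ 2) r + U r ^ (p - 1)) * v r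

namespace GS

def q (y : ℝ) : ℝ := √(1 + 2 * y ^ 2)
def S (y : ℝ) : ℝ := ∫ t in (0:ℝ)..y, q t
def g (ω p y : ℝ) : ℝ := y * (y ^ (p - 1) - ω) / q y
def Gam (ω p y : ℝ) : ℝ :=
  (p * y ^ (p - 1) - ω) / q y ^ 2 - 2 * y ^ 2 * (y ^ (p - 1) - ω) / q y ^ 4
def G (ω p y : ℝ) : ℝ := y ^ 2 * (y ^ (p - 1) / (p + 1) - ω / 2)

lemma q_sq (y : ℝ) : q y ^ 2 = 1 + 2 * y ^ 2 := by
  unfold q; rw [Real.sq_sqrt]; positivity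

lemma q_pos (y : ℝ) : 0 < q y := by unfold q; positivity

lemma q_one (y : ℝ) : 1 ≤ q y := by
  have := q_sq y; have := q_pos y; nlinarith [sq_nonneg y]

lemma q_cont : Continuous q := by unfold q; fun_prop

lemma q_deriv (y : ℝ) : HasDerivAt q (2 * y / q y) y := by
  have h : HasDerivAt (fun y : ℝ => 1 + 2 * y ^ 2) (2 * (2 * y)) y := by
    simpa using ((hasDerivAt_pow 2 y).const_mul 2).const_add 1
  have := h.sqrt (by positivity)
  unfold q
  convert this using 1
  field_simp

lemma S_deriv (y : ℝ) : HasDerivAt S (q y) y :=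
  (q_cont.integral_hasStrictDerivAt 0 y).hasDerivAt

lemma S_zero : S 0 = 0 := by simp [S]

lemma S_cont : Continuous S :=
  continuous_iff_continuousAt.2 fun y => (S_deriv y).continuousAt

lemma lt_of_deriv {f f' : ℝ → ℝ} {a b : ℝ} (hab : a < b)
    (hc : ContinuousOn f (Set.Icc a b))
    (hd : ∀ x ∈ Set.Ioo a b, HasDerivAt f (f' x) x) (hp : ∀ x ∈ Set.Ioo a b, 0 < f' x) :
    f a < f b := by
  have := strictMonoOn_of_deriv_pos (convex_Icc a b) hc
    (fun x hx => by rw [interior_Icc] at hx; rw [(hd x hx).deriv]; exact hp x hx)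
  exact this (Set.left_mem_Icc.2 hab.le) (Set.right_mem_Icc.2 hab.le) hab

lemma le_of_deriv {f f' : ℝ → ℝ} {a b : ℝ} (hab : a ≤ b)
    (hc : ContinuousOn f (Set.Icc a b))
    (hd : ∀ x ∈ Set.Ioo a b, HasDerivAt f (f' x) x) (hp : ∀ x ∈ Set.Ioo a b, 0 ≤ f' x) :
    f a ≤ f b := by
  have := monotoneOn_of_deriv_nonneg (convex_Icc a b) hc
    (fun x hx => by
      rw [interior_Icc] at hx; exact (hd x hx).differentiableAt.differentiableWithinAt)
    (fun x hx => by rw [interior_Icc] at hx; rw [(hd x hx).deriv]; exact hp x hx)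
  exact this (Set.left_mem_Icc.2 hab) (Set.right_mem_Icc.2 hab) hab

lemma S_pos {y : ℝ} (hy : 0 < y) : 0 < S y := by
  have := lt_of_deriv hy S_cont.continuousOn (fun x _ => S_deriv x) (fun x _ => q_pos x)
  rwa [S_zero] at this

lemma S_le {y : ℝ} (hy : 0 < y) : S y ≤ q y * y := by
  have := le_of_deriv (f := fun x => q x * x - S x)
    (f' := fun x => 2 * x / q x * x + q x * 1 - q x) hy.le
    (by apply Continuous.continuousOn; exact (q_cont.mul continuous_id).sub S_cont)
    (fun x _ => ((q_deriv x).mul (hasDerivAt_id x)).sub (S_deriv x))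
    (fun x hx => by
      have := hx.1; have := q_pos x
      have : 0 ≤ 2 * x / q x * x := by positivity
      linarith)
  simp [S_zero] at this
  linarith

lemma S_ge {y : ℝ} (hy : 0 < y) : y * q y ^ 3 ≤ S y * (1 + 4 * y ^ 2) := by
  have hd : ∀ x : ℝ, HasDerivAt (fun x => S x - x * q x ^ 3 / (1 + 4 * x ^ 2))
      (q x - ((1 * q x ^ 3 + x * (3 * q x ^ 2 * (2 * x / q x))) * (1 + 4 * x ^ 2)
        - x * q x ^ 3 * (4 * (2 * x))) / (1 + 4 * x ^ 2) ^ 2) x := by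
    intro x
    have h3 : HasDerivAt (fun x => q x ^ 3) (3 * q x ^ 2 * (2 * x / q x)) x := by
      have := (q_deriv x).pow 3
      simpa [Pi.pow_def] using this
    have h4 : HasDerivAt (fun x : ℝ => 1 + 4 * x ^ 2) (4 * (2 * x)) x := by
      simpa using ((hasDerivAt_pow 2 x).const_mul 4).const_add 1
    exact (S_deriv x).sub (((hasDerivAt_id x).mul h3).div h4 (by positivity))
  have := le_of_deriv hy.le (fun x _ => (hd x).continuousAt.continuousWithinAt)
    (fun x _ => hd x) (fun x hx => by
      have h1 := hx.1; have h2 := q_pos x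
      have h3 := q_sq x
      have : (1 * q x ^ 3 + x * (3 * q x ^ 2 * (2 * x / q x))) * (1 + 4 * x ^ 2)
        - x * q x ^ 3 * (4 * (2 * x)) = q x * (1 + 4 * x^2 + 16 * x^4) := by
        have e : (1 * q x ^ 3 + x * (3 * q x ^ 2 * (2 * x / q x))) * (1 + 4 * x ^ 2)
          - x * q x ^ 3 * (4 * (2 * x)) =
          q x * ((q x ^ 2 + 6 * x ^ 2) * (1 + 4 * x^2) - 8 * x ^ 2 * q x ^ 2) := by
          field_simp; ring
        rw [e, h3]; ring
      rw [this, sub_nonneg, div_le_iff₀ (by positivity)]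
      apply mul_le_mul_of_nonneg_left _ h2.le
      nlinarith [sq_nonneg x])
  simp [S_zero] at this
  rwa [div_le_iff₀ (by positivity)] at this

/-- `m = S / (q y)`. -/
def m (y : ℝ) : ℝ := S y / (q y * y)

lemma m_pos {y : ℝ} (hy : 0 < y) : 0 < m y := by
  have := S_pos hy; have := q_pos y; unfold m; positivity

lemma m_le {y : ℝ} (hy : 0 < y) : m y ≤ 1 := by
  have h := S_le hy; have := q_pos y; unfold m
  rw [div_le_one (by positivity)]; exact h

lemma m_anti {x y : ℝ} (hx : 0 < x) (hxy : x ≤ y) : m y ≤ m x := by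
  have hd : ∀ t ∈ Set.Icc x y, HasDerivAt (fun t => - m t)
      (-((q t * (q t * t) - S t * (2 * t / q t * t + q t * 1)) / (q t * t) ^ 2)) t := by
    intro t ht
    have ht : 0 < t := lt_of_lt_of_le hx ht.1
    have := q_pos t
    exact ((S_deriv t).div ((q_deriv t).mul (hasDerivAt_id t)) (by simp; grind)).neg
  have := le_of_deriv hxy (fun t ht => (hd t ht).continuousAt.continuousWithinAt)
    (fun t ht => hd t (Set.Ioo_subset_Icc_self ht)) (fun t ht => by
      have h1 : 0 < t := hx.trans ht.1
      have h2 := q_pos t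
      have h3 := q_sq t
      have h4 := S_ge h1
      rw [← neg_div]
      apply div_nonneg _ (by positivity)
      have e : -(q t * (q t * t) - S t * (2 * t / q t * t + q t * 1)) =
        (S t * (2 * t ^ 2 + q t ^ 2) - t * q t ^ 3) / q t := by field_simp; ring
      rw [e]
      apply div_nonneg _ h2.le
      rw [h3]; nlinarith)
  linarith

variable {ω p : ℝ}

lemma rpow_deriv {y : ℝ} (hy : 0 < y) :
    HasDerivAt (fun y : ℝ => y ^ (p - 1)) ((p - 1) * y ^ (p - 1) / y) y := by
  have := Real.hasDerivAt_rpow_const (x := y) (p := p - 1) (Or.inl hy.ne')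
  convert this using 1
  rw [Real.rpow_sub_one hy.ne' (p - 1)]; ring

lemma g_deriv {y : ℝ} (hy : 0 < y) : HasDerivAt (g ω p) (q y * Gam ω p y) y := by
  have hq := q_pos y
  have := (((hasDerivAt_id y).mul ((rpow_deriv (p := p) hy).sub_const ω)).div (q_deriv y) hq.ne')
  refine this.congr_deriv ?_
  simp [Gam]
  field_simp
  ring

lemma G_deriv (hp : 1 < p) {y : ℝ} (hy : 0 < y) : HasDerivAt (G ω p) (q y * g ω p y) y := by
  have hq := q_pos y
  have h1 : p + 1 ≠ 0 := by linarith
  have := (hasDerivAt_pow 2 y).mul (((rpow_deriv (p := p) hy).div_const (p+1)).sub_const (ω/2))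
  refine this.congr_deriv ?_
  simp [g]
  field_simp
  ring

lemma Gam_contAt {y : ℝ} (hy : 0 < y) : ContinuousAt (Gam ω p) y := by
  have := (rpow_deriv (p := p) hy).continuousAt
  have h2 := q_cont.continuousAt (x := y)
  have := q_pos y
  unfold Gam
  fun_prop (disch := positivity)

lemma Gam_eq (y : ℝ) : Gam ω p y =
    ((p - 1) * y ^ (p - 1) + (y ^ (p - 1) - ω) / q y ^ 2) / q y ^ 2 := by
  have h := q_pos y
  have h2 := q_sq y
  unfold Gam
  have : 2 * y ^ 2 = q y ^ 2 - 1 := by linarith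
  rw [this]; field_simp; ring

lemma g_neg {y : ℝ} (hy : 0 < y) (ha : y ^ (p - 1) < ω) : g ω p y < 0 := by
  unfold g; exact div_neg_of_neg_of_pos (mul_neg_of_pos_of_neg hy (by linarith)) (q_pos y)

lemma g_pos {y : ℝ} (hy : 0 < y) (ha : ω < y ^ (p - 1)) : 0 < g ω p y := by
  unfold g; exact div_pos (mul_pos hy (by linarith)) (q_pos y)

/-- `S Γ - g ≥ 0` (strictly) below the threshold. -/
lemma D_pos (hp : 1 < p) {y : ℝ} (hy : 0 < y) (ha : y ^ (p - 1) ≤ ω) :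
    g ω p y < S y * Gam ω p y := by
  have hq := q_pos y
  have hq1 := q_one y
  have hS := S_pos hy
  have hSl := S_le hy
  have ha0 : 0 < y ^ (p - 1) := Real.rpow_pos_of_pos hy _
  rw [Gam_eq, g]
  set a := y ^ (p - 1)
  have e : S y * (((p - 1) * a + (a - ω) / q y ^ 2) / q y ^ 2) =
    S y * (p - 1) * a / q y ^ 2 - (S y * (ω - a)) / q y ^ 4 := by field_simp; ring
  rw [e]
  have h1 : 0 < S y * (p - 1) * a / q y ^ 2 := by
    have : 0 < p - 1 := by linarith
    positivity
  have h2 : (S y * (ω - a)) / q y ^ 4 ≤ y * (ω - a) / q y := by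
    rw [div_le_div_iff₀ (by positivity) hq]
    have h0 : 0 ≤ ω - a := by linarith
    calc S y * (ω - a) * q y ≤ (q y * y) * (ω - a) * q y := by gcongr
      _ = y * (ω - a) * q y ^ 2 := by ring
      _ ≤ y * (ω - a) * q y ^ 4 := by gcongr <;> first | exact hq1 | norm_num
  have h3 : y * (a - ω) / q y = - (y * (ω - a) / q y) := by ring
  linarith

def K (ω p y : ℝ) : ℝ := S y * Gam ω p y / g ω p y

lemma K_eq {y : ℝ} (hy : 0 < y) (ha : ω < y ^ (p - 1)) :
    K ω p y = m y * (1 / q y ^ 2 + (p - 1) + (p - 1) * ω / (y ^ (p - 1) - ω)) := by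
  have hq := q_pos y
  have : y ^ (p - 1) - ω ≠ 0 := by linarith
  rw [K, Gam_eq, g, m]
  field_simp
  ring

lemma K_anti (hω : 0 < ω) (hp : 1 < p) {x y : ℝ} (hx : 0 < x) (hxy : x < y)
    (ha : ω < x ^ (p - 1)) : K ω p y < K ω p x := by
  have hy := hx.trans hxy
  have hlt : x ^ (p - 1) < y ^ (p - 1) := Real.rpow_lt_rpow hx.le hxy (by linarith)
  rw [K_eq hy (ha.trans hlt), K_eq hx ha]
  have h1 := m_anti hx hxy.le
  have h2 := m_pos hy
  have h3 := m_pos hx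
  have hq := q_pos x
  have hq2 : 1 / q y ^ 2 ≤ 1 / q x ^ 2 := by
    apply one_div_le_one_div_of_le (by positivity)
    rw [q_sq, q_sq]; nlinarith
  have hp1 : 0 < p - 1 := by linarith
  have h5 : (p - 1) * ω / (y ^ (p - 1) - ω) < (p - 1) * ω / (x ^ (p - 1) - ω) := by
    apply div_lt_div_of_pos_left (by positivity) (by linarith) (by linarith)
  have h6 : 0 < (p - 1) * ω / (y ^ (p - 1) - ω) := div_pos (by positivity) (by linarith)
  have h7 : 0 < 1 / q y ^ 2 := by have := q_pos y; positivity
  apply mul_lt_mul' h1 (by linarith) (by linarith) h3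

/-- Sign of the Wronskian source below `y1`. -/
lemma J_below (hω : 0 < ω) (hp : 1 < p) {y y1 : ℝ} (hy : 0 < y) (hy1 : y < y1)
    (ha1 : ω < y1 ^ (p - 1)) (hK : 1 < K ω p y1) :
    g ω p y * K ω p y1 < S y * Gam ω p y := by
  rcases lt_trichotomy (y ^ (p - 1)) ω with h | h | h
  · have := D_pos hp hy h.le
    have := g_neg hy h
    nlinarith
  · have h0 := D_pos hp hy h.le
    have : g ω p y = 0 := by simp [g, h]
    rw [this] at h0 ⊢; linarith
  · have h1 := K_anti hω hp hy hy1 h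
    have h2 := g_pos hy h
    have : S y * Gam ω p y = g ω p y * K ω p y := by rw [K]; field_simp
    rw [this]; gcongr

lemma J_above (hω : 0 < ω) (hp : 1 < p) {y y1 : ℝ} (hy : 0 < y1) (hy1 : y1 < y)
    (ha1 : ω < y1 ^ (p - 1)) :
    S y * Gam ω p y < g ω p y * K ω p y1 := by
  have h1 := K_anti hω hp hy hy1 ha1
  have hlt : y1 ^ (p - 1) < y ^ (p - 1) := Real.rpow_lt_rpow hy.le hy1 (by linarith)
  have h2 := g_pos (hy.trans hy1) (ha1.trans hlt)
  have : S y * Gam ω p y = g ω p y * K ω p y := by rw [K]; field_simp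
  rw [this]; gcongr

lemma D_nonneg (hω : 0 < ω) (hp : 1 < p) {y y1 : ℝ} (hy : 0 < y) (hy1 : y < y1)
    (ha1 : ω < y1 ^ (p - 1)) (hK : 1 < K ω p y1) :
    g ω p y ≤ S y * Gam ω p y := by
  rcases le_or_gt (y ^ (p - 1)) ω with h | h
  · exact (D_pos hp hy h).le
  · have := J_below hω hp hy hy1 ha1 hK
    have := g_pos hy h
    nlinarith

lemma G_tendsto (hp : 1 < p) : Tendsto (G ω p) (𝓝[>] 0) (𝓝 0) := by
  have : Continuous (G ω p) := by
    unfold G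
    have : Continuous fun y : ℝ => y ^ (p - 1) := Real.continuous_rpow_const (by linarith)
    fun_prop
  have h := this.tendsto 0
  simp only [G] at h
  simp at h
  exact h.mono_left nhdsWithin_le_nhds

lemma g_cont (hp : 1 < p) : Continuous (g ω p) := by
  unfold g
  have : Continuous fun y : ℝ => y ^ (p - 1) := Real.continuous_rpow_const (by linarith)
  have h2 := q_cont
  exact (by fun_prop : Continuous fun y : ℝ => y * (y ^ (p - 1) - ω)).div h2
    fun y => (q_pos y).ne'

lemma G_cont (hp : 1 < p) : Continuous (G ω p) := by
  unfold G
  have : Continuous fun y : ℝ => y ^ (p - 1) := Real.continuous_rpow_const (by linarith)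
  fun_prop

/-- `s g - 2 G ≥ 0` below `y1`. -/
lemma H_nonneg (hω : 0 < ω) (hp : 1 < p) {y y1 : ℝ} (hy : 0 < y) (hy1 : y ≤ y1)
    (ha1 : ω < y1 ^ (p - 1)) (hK : 1 < K ω p y1) :
    2 * G ω p y ≤ S y * g ω p y := by
  have := le_of_deriv (f := fun y => S y * g ω p y - 2 * G ω p y)
    (f' := fun y => q y * g ω p y + S y * (q y * Gam ω p y) - 2 * (q y * g ω p y)) hy.le
    (by
      apply Continuous.continuousOn
      exact (S_cont.mul (g_cont hp)).sub (continuous_const.mul (G_cont hp)))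
    (fun x hx => ((S_deriv x).mul (g_deriv hx.1)).sub ((G_deriv hp hx.1).const_mul 2))
    (fun x hx => by
      have h1 := D_nonneg hω hp hx.1 (hx.2.trans_le hy1) ha1 hK
      have h2 := q_pos x
      nlinarith)
  simp [S_zero, G] at this
  simpa [G] using this

def Q (n ω p y : ℝ) : ℝ := 2 * (n + 1) * G ω p y - (n - 1) * (S y * g ω p y)

lemma Q_eq {n y : ℝ} (hp : 1 < p) (hy : 0 < y) : Q n ω p y = y ^ 2 *
    (y ^ (p - 1) * (2 * (n + 1) / (p + 1) - (n - 1) * m y) - ω * ((n + 1) - (n - 1) * m y)) := by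
  have hq := q_pos y
  have h1 : p + 1 ≠ 0 := by linarith
  rw [Q, G, g, m]
  field_simp
  ring

lemma Q_up {n x y : ℝ} (hn : 1 ≤ n) (hω : 0 < ω) (hp : 1 < p) (hx : 0 < x) (hxy : x < y)
    (hQ : 0 < Q n ω p x) : 0 < Q n ω p y := by
  have hy := hx.trans hxy
  rw [Q_eq hp hx] at hQ
  rw [Q_eq hp hy]
  have hlt : x ^ (p - 1) < y ^ (p - 1) := Real.rpow_lt_rpow hx.le hxy (by linarith)
  have ha0 : 0 < x ^ (p - 1) := Real.rpow_pos_of_pos hx _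
  have h1 := m_anti hx hxy.le
  have h2 := m_pos hy
  have h3 := m_le hx
  set a := x ^ (p - 1)
  set b := y ^ (p - 1)
  have hQ := pos_of_mul_pos_right hQ (by positivity)
  apply mul_pos (by positivity)
  set c := 2 * (n + 1) / (p + 1) with hc
  have hcn : c < n + 1 := by rw [hc, div_lt_iff₀ (by linarith)]; nlinarith
  -- set X = (n-1) m x ≥ Y = (n-1) m y
  have hXY : (n - 1) * m y ≤ (n - 1) * m x := by
    apply mul_le_mul_of_nonneg_left h1 (by linarith)
  have hX : (n - 1) * m x < n + 1 := by nlinarith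
  generalize (n - 1) * m x = X at *
  generalize (n - 1) * m y = Y at *
  have hA : 0 < c - X := by
    have : 0 < ω * (n + 1 - X) := mul_pos hω (by linarith)
    exact pos_of_mul_pos_right (by linarith : 0 < a * (c - X)) ha0.le
  -- a (c - X) > ω (M - X)
  have hwa : ω < a := by
    have : ω * (c - X) < a * (c - X) := by
      have : ω * (c - X) < ω * (n + 1 - X) := by gcongr
      linarith
    exact lt_of_mul_lt_mul_right this hA.le
  nlinarith [mul_nonneg (sub_nonneg.2 hXY) (sub_nonneg.2 hwa.le), mul_pos (sub_pos.2 hlt) (by linarith : 0 < c - Y)]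


structure Data (k : ℕ) (ω p : ℝ) (U z φ ψ : ℝ → ℝ) : Prop where
  hk : 1 ≤ k
  hω : 0 < ω
  hp : 1 < p
  Upos : ∀ r, 0 < r → 0 < U r
  Uanti : StrictAntiOn U (Set.Ioi 0)
  dU : ∀ r, 0 < r → HasDerivAt U (z r / q (U r)) r
  dz : ∀ r, 0 < r → HasDerivAt z (-(k / r) * z r - g ω p (U r)) r
  dφ : ∀ r, 0 < r → HasDerivAt φ (ψ r) r
  dψ : ∀ r, 0 < r → HasDerivAt ψ (-(k / r) * ψ r - Gam ω p (U r) * φ r) r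
  U0 : ∃ a, 0 < a ∧ Tendsto U (𝓝[>] 0) (𝓝 a)
  z0 : Tendsto z (𝓝[>] 0) (𝓝 0)
  φ0 : ∃ c, Tendsto φ (𝓝[>] 0) (𝓝 c)
  Uinf : ∀ j : ℕ, Tendsto (fun r => r ^ j * U r) atTop (𝓝 0)
  zinf : ∀ j : ℕ, Tendsto (fun r => r ^ j * z r) atTop (𝓝 0)
  lim : ∀ ε > 0, ∀ R : ℝ, ∃ r > R, |φ r| < ε ∧ |ψ r| < ε

namespace Data

variable {k : ℕ} {U z φ ψ : ℝ → ℝ}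

lemma neg (h : Data k ω p U z φ ψ) : Data k ω p U z (fun r => - φ r) (fun r => - ψ r) where
  hk := h.hk
  hω := h.hω
  hp := h.hp
  Upos := h.Upos
  Uanti := h.Uanti
  dU := h.dU
  dz := h.dz
  dφ := fun r hr => (h.dφ r hr).neg
  dψ := fun r hr => by
    refine (h.dψ r hr).neg.congr_deriv ?_
    ring
  U0 := h.U0
  z0 := h.z0
  φ0 := by obtain ⟨c, hc⟩ := h.φ0; exact ⟨-c, hc.neg⟩
  Uinf := h.Uinf
  zinf := h.zinf
  lim := by simpa using h.lim

lemma dpow (k : ℕ) {r : ℝ} (hr : 0 < r) : HasDerivAt (fun r : ℝ => r ^ k) (k / r * r ^ k) r := by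
  have := hasDerivAt_pow k r
  refine this.congr_deriv ?_
  rcases k with _ | k
  · simp
  · simp; field_simp; ring

lemma z_nonpos (h : Data k ω p U z φ ψ) {r : ℝ} (hr : 0 < r) : z r ≤ 0 := by
  have h1 := (h.dU r hr).deriv
  have h2 : deriv U r ≤ 0 := by
    have h3 : derivWithin U (Set.Ioi 0) r ≤ 0 := h.Uanti.antitoneOn.derivWithin_nonpos
    rwa [derivWithin_of_isOpen isOpen_Ioi hr] at h3
  rw [h1, div_nonpos_iff] at h2
  have := q_pos (U r)
  rcases h2 with h2 | h2
  · linarith [h2.2]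
  · exact h2.1

/-- quantitative regularity at the origin -/
lemma psi_bound (h : Data k ω p U z φ ψ) {r B : ℝ} (hr : 0 < r)
    (hB : ∀ s, 0 < s → s ≤ r → |Gam ω p (U s) * φ s| ≤ B) (hr1 : r ≤ 1) : |ψ r| ≤ B * r := by
  by_contra hcon
  push Not at hcon
  have hB0 : 0 ≤ B := (abs_nonneg _).trans (hB r hr le_rfl)
  set d := r ^ k * (|ψ r| - B * r) with hd
  have hdpos : 0 < d := mul_pos (by positivity) (by linarith)
  have hX : ∀ s, 0 < s → HasDerivAt (fun s => s ^ k * ψ s) (- s ^ k * (Gam ω p (U s) * φ s)) s := by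
    intro s hs
    refine ((dpow k hs).mul (h.dψ s hs)).congr_deriv ?_
    ring
  -- the difference estimate
  have hdiff : ∀ s, 0 < s → s ≤ r → |r ^ k * ψ r - s ^ k * ψ s| ≤ B * r ^ k * r := by
    intro s hs hsr
    have := (convex_Icc s r).norm_image_sub_le_of_norm_hasDerivWithin_le
      (f := fun s => s ^ k * ψ s) (f' := fun s => - s ^ k * (Gam ω p (U s) * φ s)) (C := B * r ^ k)
      (fun t ht => (hX t (hs.trans_le ht.1)).hasDerivWithinAt)
      (fun t ht => by
        have ht0 : 0 < t := hs.trans_le ht.1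
        rw [norm_mul, norm_neg, norm_pow, Real.norm_eq_abs, Real.norm_eq_abs, abs_of_pos ht0,
          mul_comm]
        exact mul_le_mul (hB t ht0 ht.2) (pow_le_pow_left₀ ht0.le ht.2 k) (by positivity) hB0)
      (Set.left_mem_Icc.2 hsr) (Set.right_mem_Icc.2 hsr)
    refine this.trans ?_
    apply mul_le_mul_of_nonneg_left _ (by positivity)
    rw [Real.norm_eq_abs, abs_of_nonneg (by linarith)]; linarith
  obtain ⟨c, hc⟩ := h.φ0
  -- sign
  have key : ∀ σ : ℝ, (σ = 1 ∨ σ = -1) → |ψ r| = σ * ψ r → False := by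
    intro σ hσ hab
    have hlow : ∀ s, 0 < s → s ≤ r → d / s ≤ σ * ψ s := by
      intro s hs hsr
      have h1 := hdiff s hs hsr
      have h2 : d ≤ s ^ k * (σ * ψ s) := by
        rw [hd, hab]
        rw [abs_le] at h1
        rcases hσ with rfl | rfl <;> nlinarith
      have h3 : 0 ≤ σ * ψ s := by
        by_contra hneg
        push Not at hneg
        have : s ^ k * (σ * ψ s) < 0 := mul_neg_of_pos_of_neg (by positivity) hneg
        linarith
      rw [div_le_iff₀ hs]
      have h4 : s ^ k ≤ s := by
        calc s ^ k ≤ s ^ 1 := pow_le_pow_of_le_one hs.le (hsr.trans hr1) h.hk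
          _ = s := pow_one s
      nlinarith
    -- log blow up
    have hmono : ∀ s, 0 < s → s ≤ r → d * (Real.log r - Real.log s) ≤ σ * φ r - σ * φ s := by
      intro s hs hsr
      have hd' : ∀ t ∈ Set.Icc s r, HasDerivAt (fun t => σ * φ t - d * Real.log t)
          (σ * ψ t - d * t⁻¹) t := fun t ht =>
        ((h.dφ t (hs.trans_le ht.1)).const_mul σ).sub
          ((Real.hasDerivAt_log (hs.trans_le ht.1).ne').const_mul d)
      have := le_of_deriv hsr (fun t ht => (hd' t ht).continuousAt.continuousWithinAt)
        (fun t ht => hd' t (Set.Ioo_subset_Icc_self ht))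
        (fun t ht => by
          have := hlow t (hs.trans ht.1) ht.2.le
          rw [div_eq_mul_inv] at this; linarith)
      linarith
    have h1 : Tendsto (fun s => d * (Real.log r - Real.log s)) (𝓝[>] 0) atTop := by
      apply Tendsto.const_mul_atTop hdpos
      apply tendsto_atTop_add_const_left
      exact tendsto_neg_atBot_atTop.comp Real.tendsto_log_nhdsGT_zero
    have h2 : Tendsto (fun s => σ * φ r - σ * φ s) (𝓝[>] 0) (𝓝 (σ * φ r - σ * c)) :=
      (hc.const_mul σ).const_sub _
    refine not_tendsto_nhds_of_tendsto_atTop (tendsto_atTop_mono' _ ?_ h1) _ h2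
    filter_upwards [Ioc_mem_nhdsGT hr] with s hs using hmono s hs.1 hs.2
  rcases abs_choice (ψ r) with h1 | h1
  · exact key 1 (Or.inl rfl) (by rw [h1]; ring)
  · exact key (-1) (Or.inr rfl) (by rw [h1]; ring)

lemma Gam_bdd (h : Data k ω p U z φ ψ) : ∃ M > 0, ∃ ε > 0, ∀ s, 0 < s → s ≤ ε →
    |Gam ω p (U s)| ≤ M := by
  obtain ⟨a, ha, hU⟩ := h.U0
  have h1 : Tendsto (fun s => |Gam ω p (U s)|) (𝓝[>] 0) (𝓝 |Gam ω p a|) :=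
    ((Gam_contAt ha).tendsto.comp hU).abs
  have h2 := h1.eventually_le_const (lt_add_one _)
  rw [eventually_nhdsWithin_iff, Metric.eventually_nhds_iff] at h2
  obtain ⟨ε, hε, h2⟩ := h2
  refine ⟨|Gam ω p a| + 1, by positivity, ε / 2, by positivity, fun s hs hse => h2 ?_ hs⟩
  rw [Real.dist_eq, sub_zero, abs_of_pos hs]; linarith

lemma phi_bdd (h : Data k ω p U z φ ψ) : ∃ A > 0, ∃ ε > 0, ∀ s, 0 < s → s ≤ ε → |φ s| ≤ A := by
  obtain ⟨a, hU⟩ := h.φ0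
  have h2 := hU.abs.eventually_le_const (lt_add_one _)
  rw [eventually_nhdsWithin_iff, Metric.eventually_nhds_iff] at h2
  obtain ⟨ε, hε, h2⟩ := h2
  refine ⟨|a| + 1, by positivity, ε / 2, by positivity, fun s hs hse => h2 ?_ hs⟩
  rw [Real.dist_eq, sub_zero, abs_of_pos hs]; linarith

lemma psi_lim (h : Data k ω p U z φ ψ) : Tendsto ψ (𝓝[>] 0) (𝓝 0) := by
  obtain ⟨M, hM, ε, hε, h1⟩ := h.Gam_bdd
  obtain ⟨A, hA, ε', hε', h2⟩ := h.phi_bdd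
  apply squeeze_zero_norm' (a := fun r => M * A * r)
  · have : 0 < min (min ε ε') 1 := by positivity
    filter_upwards [Ioc_mem_nhdsGT this] with r hr
    have hr2 := hr.2
    simp only [le_min_iff] at hr2
    exact h.psi_bound hr.1 (fun s hs hsr => by
      rw [abs_mul]
      exact mul_le_mul (h1 s hs (by linarith)) (h2 s hs (by linarith)) (abs_nonneg _) hM.le) hr2.2
  · have : Tendsto (fun r : ℝ => M * A * r) (𝓝 0) (𝓝 (M * A * 0)) := tendsto_id.const_mul _
    rw [mul_zero] at this
    exact this.mono_left nhdsWithin_le_nhds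

lemma uniq (h : Data k ω p U z φ ψ) {a : ℝ} (ha : 0 < a) (h1 : φ a = 0) (h2 : ψ a = 0) :
    ∀ r, 0 < r → φ r = 0 := by
  -- local bound
  have hb : ∀ x y : ℝ, 0 < x → x ≤ y → ∃ C, ∀ r ∈ Set.Icc x y,
      |2 * (φ r * ψ r + ψ r * (-(k / r) * ψ r - Gam ω p (U r) * φ r))| ≤
        C * (φ r ^ 2 + ψ r ^ 2) := by
    intro x y hx hxy
    have hc : ContinuousOn (fun r => Gam ω p (U r)) (Set.Icc x y) := fun r hr =>
      ((Gam_contAt (h.Upos r (hx.trans_le hr.1))).comp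
        (h.dU r (hx.trans_le hr.1)).continuousAt).continuousWithinAt
    obtain ⟨M, hM⟩ := isCompact_Icc.exists_bound_of_continuousOn hc
    refine ⟨1 + M + 2 * (k / x), fun r hr => ?_⟩
    have hr0 : 0 < r := hx.trans_le hr.1
    have hM := hM r hr
    rw [Real.norm_eq_abs, abs_le] at hM
    have hkr : (k : ℝ) / r ≤ k / x := by gcongr; exact hr.1
    have hkr0 : 0 ≤ (k : ℝ) / r := by positivity
    generalize Gam ω p (U r) = γ at *
    generalize (k : ℝ) / r = t at *
    generalize φ r = f at *
    generalize ψ r = e at *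
    have e1 : |2 * f * e| ≤ f ^ 2 + e ^ 2 := by
      rw [abs_le]; constructor <;> nlinarith [sq_nonneg (f + e), sq_nonneg (f - e)]
    have e2 : |1 - γ| ≤ 1 + M := by rw [abs_le]; constructor <;> linarith [hM.1, hM.2]
    have e3 : |2 * f * e * (1 - γ)| ≤ (f ^ 2 + e ^ 2) * (1 + M) := by
      rw [abs_mul]; exact mul_le_mul e1 e2 (abs_nonneg _) (by positivity)
    have e4 : 2 * t * e ^ 2 ≤ 2 * (k / x) * (f ^ 2 + e ^ 2) := by
      have : 0 ≤ (k / x : ℝ) := hkr0.trans hkr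
      apply mul_le_mul <;> nlinarith [sq_nonneg f, sq_nonneg e]
    have e5 : 0 ≤ 2 * t * e ^ 2 := by positivity
    rw [abs_le] at e3 ⊢
    constructor <;> nlinarith [e3.1, e3.2]
  have hE : ∀ C r, 0 < r → HasDerivAt (fun r => (φ r ^ 2 + ψ r ^ 2) * Real.exp (C * r))
      ((2 * (φ r * ψ r + ψ r * (-(k / r) * ψ r - Gam ω p (U r) * φ r)) +
        C * (φ r ^ 2 + ψ r ^ 2)) * Real.exp (C * r)) r := by
    intro C r hr
    have e1 : HasDerivAt (fun r => Real.exp (C * r)) (Real.exp (C * r) * C) r := by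
      have := ((hasDerivAt_id r).const_mul C).exp
      simpa using this
    have e2 := ((h.dφ r hr).pow 2).add ((h.dψ r hr).pow 2)
    refine (e2.mul e1).congr_deriv ?_
    simp
    ring
  intro r hr
  have fin : φ r ^ 2 + ψ r ^ 2 ≤ 0 → φ r = 0 := fun h => by nlinarith [sq_nonneg (φ r), sq_nonneg (ψ r)]
  apply fin
  rcases le_total a r with har | har
  · obtain ⟨C, hC⟩ := hb a r ha har
    have := le_of_deriv har
      (fun t ht => (hE (-C) t (ha.trans_le ht.1)).neg.continuousAt.continuousWithinAt)
      (fun t ht => (hE (-C) t (ha.trans ht.1)).neg)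
      (fun t ht => by
        have := hC t (Set.Ioo_subset_Icc_self ht)
        rw [abs_le] at this
        rw [← neg_mul]
        exact mul_nonneg (by linarith [this.2]) (Real.exp_pos _).le)
    simp [h1, h2] at this
    by_contra hcon
    push Not at hcon
    have := mul_pos hcon (Real.exp_pos (-(C * r)))
    linarith
  · obtain ⟨C, hC⟩ := hb r a hr har
    have := le_of_deriv har
      (fun t ht => (hE C t (hr.trans_le ht.1)).continuousAt.continuousWithinAt)
      (fun t ht => (hE C t (hr.trans ht.1)))
      (fun t ht => by
        have := hC t (Set.Ioo_subset_Icc_self ht)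
        rw [abs_le] at this
        exact mul_nonneg (by linarith [this.1]) (Real.exp_pos _).le)
    simp [h1, h2] at this
    by_contra hcon
    push Not at hcon
    have := mul_pos hcon (Real.exp_pos (C * r))
    linarith

lemma uniq0 (h : Data k ω p U z φ ψ) (h0 : Tendsto φ (𝓝[>] 0) (𝓝 0)) :
    ∀ r, 0 < r → φ r = 0 := by
  obtain ⟨M, hM, ε, hε, h1⟩ := h.Gam_bdd
  obtain ⟨A, hA, ε', hε', h2⟩ := h.phi_bdd
  set δ := min (min ε ε') (min 1 (1 / (2 * M))) with hδ
  have hδ0 : 0 < δ := by positivity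
  have d1 : δ ≤ ε := (min_le_left _ _).trans (min_le_left _ _)
  have d2 : δ ≤ ε' := (min_le_left _ _).trans (min_le_right _ _)
  have d3 : δ ≤ 1 := (min_le_right _ _).trans (min_le_left _ _)
  have d4 : M * δ ≤ 1 / 2 := by
    have : δ ≤ 1 / (2 * M) := (min_le_right _ _).trans (min_le_right _ _)
    rw [le_div_iff₀ (by positivity)] at this; linarith
  have step : ∀ A : ℝ, 0 ≤ A → (∀ s, 0 < s → s ≤ δ → |φ s| ≤ A) →
      ∀ s, 0 < s → s ≤ δ → |ψ s| ≤ A / 2 ∧ |φ s| ≤ A / 2 := by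
    intro A hA hφ
    have hψ : ∀ s, 0 < s → s ≤ δ → |ψ s| ≤ A / 2 := by
      intro s hs hsδ
      have := h.psi_bound (B := M * A) hs (fun t ht hts => by
        rw [abs_mul]
        exact mul_le_mul (h1 t ht (by linarith)) (hφ t ht (by linarith)) (abs_nonneg _) hM.le)
        (by linarith)
      have h5 : M * s ≤ 1 / 2 := by nlinarith
      nlinarith
    intro s hs hsδ
    refine ⟨hψ s hs hsδ, ?_⟩
    have hdiff : ∀ t, 0 < t → t ≤ s → |φ s - φ t| ≤ A / 2 := by
      intro t ht hts
      have := (convex_Icc t s).norm_image_sub_le_of_norm_hasDerivWithin_le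
        (f := φ) (f' := ψ) (C := A / 2)
        (fun x hx => (h.dφ x (ht.trans_le hx.1)).hasDerivWithinAt)
        (fun x hx => hψ x (ht.trans_le hx.1) (hx.2.trans hsδ))
        (Set.left_mem_Icc.2 hts) (Set.right_mem_Icc.2 hts)
      refine this.trans ?_
      rw [Real.norm_eq_abs, abs_of_nonneg (by linarith)]
      nlinarith
    have hl : Tendsto (fun t => |φ s - φ t|) (𝓝[>] 0) (𝓝 |φ s - 0|) := (h0.const_sub _).abs
    rw [sub_zero] at hl
    refine le_of_tendsto hl ?_
    filter_upwards [Ioc_mem_nhdsGT hs] with t ht using hdiff t ht.1 ht.2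
  have iter : ∀ n : ℕ, ∀ s, 0 < s → s ≤ δ → |φ s| ≤ A * (1 / 2) ^ n := by
    intro n
    induction n with
    | zero => intro s hs hsd; simpa using h2 s hs (by linarith)
    | succ n ih =>
      intro s hs hsd
      have := (step _ (by positivity) ih s hs hsd).2
      rw [pow_succ]; linarith
  have hz : ∀ s, 0 < s → s ≤ δ → |φ s| ≤ 0 := by
    intro s hs hsd
    have : Tendsto (fun n : ℕ => A * (1 / 2 : ℝ) ^ n) atTop (𝓝 (A * 0)) :=
      (tendsto_pow_atTop_nhds_zero_of_lt_one (by norm_num) (by norm_num)).const_mul A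
    rw [mul_zero] at this
    exact ge_of_tendsto' this fun n => iter n s hs hsd
  have hf := step 0 le_rfl hz δ hδ0 le_rfl
  simp at hf
  exact h.uniq hδ0 hf.2 hf.1

lemma dw (h : Data k ω p U z φ ψ) {r : ℝ} (hr : 0 < r) :
    HasDerivAt (fun r => S (U r)) (z r) r := by
  have hq := q_pos (U r)
  refine ((S_deriv (U r)).comp r (h.dU r hr)).congr_deriv ?_
  field_simp

lemma dg (h : Data k ω p U z φ ψ) {r : ℝ} (hr : 0 < r) :
    HasDerivAt (fun r => g ω p (U r)) (Gam ω p (U r) * z r) r := by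
  have hq := q_pos (U r)
  refine ((g_deriv (h.Upos r hr)).comp r (h.dU r hr)).congr_deriv ?_
  field_simp

lemma dG (h : Data k ω p U z φ ψ) {r : ℝ} (hr : 0 < r) :
    HasDerivAt (fun r => G ω p (U r)) (g ω p (U r) * z r) r := by
  have hq := q_pos (U r)
  refine ((G_deriv h.hp (h.Upos r hr)).comp r (h.dU r hr)).congr_deriv ?_
  field_simp

/-- Pohozaev function -/
def P (k : ℕ) (ω p : ℝ) (U z : ℝ → ℝ) (r : ℝ) : ℝ :=
  r ^ (k + 1) * (z r ^ 2 + 2 * G ω p (U r)) + (k - 1) * (r ^ k * (S (U r) * z r))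

lemma dP (h : Data k ω p U z φ ψ) {r : ℝ} (hr : 0 < r) :
    HasDerivAt (P k ω p U z) (r ^ k * Q k ω p (U r)) r := by
  have h1 := (dpow (k + 1) hr).mul (((h.dz r hr).pow 2).add ((h.dG hr).const_mul 2))
  have h2 := ((dpow k hr).mul ((h.dw hr).mul (h.dz r hr))).const_mul ((k : ℝ) - 1)
  refine (h1.add h2).congr_deriv ?_
  simp [Q]
  field_simp
  ring

def V (μ l : ℝ) (U z : ℝ → ℝ) (r : ℝ) : ℝ := μ * (r * z r) + l * S (U r)

def V1 (k : ℕ) (ω p μ l : ℝ) (U z : ℝ → ℝ) (r : ℝ) : ℝ :=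
  (μ * (1 - k) + l) * z r - μ * (r * g ω p (U r))

def W (k : ℕ) (ω p μ l : ℝ) (U z φ ψ : ℝ → ℝ) (r : ℝ) : ℝ :=
  (r ^ k * V μ l U z r) * ψ r - φ r * (r ^ k * V1 k ω p μ l U z r)

lemma dW (h : Data k ω p U z φ ψ) (μ l : ℝ) {r : ℝ} (hr : 0 < r) :
    HasDerivAt (W k ω p μ l U z φ ψ) (r ^ k * (φ r * (2 * μ * g ω p (U r) +
      l * (g ω p (U r) - S (U r) * Gam ω p (U r))))) r := by
  have hV : HasDerivAt (V μ l U z) (V1 k ω p μ l U z r) r := by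
    refine ((((hasDerivAt_id r).mul (h.dz r hr)).const_mul μ).add
      ((h.dw hr).const_mul l)).congr_deriv ?_
    simp [V1]
    field_simp
    ring
  have hV1 := ((h.dz r hr).const_mul (μ * (1 - k) + l)).sub
    (((hasDerivAt_id r).mul (h.dg hr)).const_mul μ)
  have := (((dpow k hr).mul hV).mul (h.dψ r hr)).sub ((h.dφ r hr).mul ((dpow k hr).mul hV1))
  refine this.congr_deriv ?_
  simp [V1, V]
  field_simp
  ring

lemma U_lim0 (h : Data k ω p U z φ ψ) {f : ℝ → ℝ} (hf : Continuous f) :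
    ∃ c, Tendsto (fun r => f (U r)) (𝓝[>] 0) (𝓝 c) := by
  obtain ⟨a, -, ha⟩ := h.U0
  exact ⟨f a, (hf.tendsto a).comp ha⟩

lemma id0 : Tendsto (fun r : ℝ => r) (𝓝[>] 0) (𝓝 0) :=
  tendsto_id.mono_left nhdsWithin_le_nhds

lemma pow0 {k : ℕ} (hk : 1 ≤ k) : Tendsto (fun r : ℝ => r ^ k) (𝓝[>] 0) (𝓝 0) := by
  have := id0.pow k
  rwa [zero_pow (by omega)] at this

lemma P_lim0 (h : Data k ω p U z φ ψ) : Tendsto (P k ω p U z) (𝓝[>] 0) (𝓝 0) := by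
  obtain ⟨a, ha⟩ := h.U_lim0 (G_cont (ω := ω) h.hp)
  obtain ⟨b, hb⟩ := h.U_lim0 S_cont
  have := ((pow0 (k := k + 1) (by omega)).mul ((h.z0.pow 2).add (ha.const_mul 2))).add
    (((pow0 h.hk).mul (hb.mul h.z0)).const_mul ((k : ℝ) - 1))
  simpa [P, show P k ω p U z = fun r => P k ω p U z r from rfl] using this

lemma W_lim0 (h : Data k ω p U z φ ψ) (μ l : ℝ) :
    Tendsto (W k ω p μ l U z φ ψ) (𝓝[>] 0) (𝓝 0) := by
  obtain ⟨a, ha⟩ := h.U_lim0 (g_cont (ω := ω) h.hp)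
  obtain ⟨b, hb⟩ := h.U_lim0 S_cont
  obtain ⟨c, hc⟩ := h.φ0
  have e1 := ((id0.mul h.z0).const_mul μ).add (hb.const_mul l)
  have e2 := (h.z0.const_mul (μ * (1 - k) + l)).sub ((id0.mul ha).const_mul μ)
  have := (((pow0 h.hk).mul e1).mul h.psi_lim).sub (hc.mul ((pow0 h.hk).mul e2))
  simpa [W, V, V1, show W k ω p μ l U z φ ψ = fun r => W k ω p μ l U z φ ψ r from rfl] using this

lemma U_inf (h : Data k ω p U z φ ψ) : Tendsto U atTop (𝓝 0) := by simpa using h.Uinf 0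
lemma z_inf (h : Data k ω p U z φ ψ) : Tendsto z atTop (𝓝 0) := by simpa using h.zinf 0

lemma S_inf (h : Data k ω p U z φ ψ) (j : ℕ) :
    Tendsto (fun r => r ^ j * S (U r)) atTop (𝓝 0) := by
  have h1 : Tendsto (fun r => q (U r) * (r ^ j * U r)) atTop (𝓝 (q 0 * 0)) :=
    ((q_cont.tendsto 0).comp h.U_inf).mul (h.Uinf j)
  rw [mul_zero] at h1
  refine tendsto_of_tendsto_of_tendsto_of_le_of_le' tendsto_const_nhds h1 ?_ ?_
  · filter_upwards [eventually_gt_atTop 0] with r hr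
    have := S_pos (h.Upos r hr)
    positivity
  · filter_upwards [eventually_gt_atTop 0] with r hr
    have := S_le (h.Upos r hr)
    calc r ^ j * S (U r) ≤ r ^ j * (q (U r) * U r) := by gcongr
      _ = _ := by ring

lemma g_inf (h : Data k ω p U z φ ψ) (j : ℕ) :
    Tendsto (fun r => r ^ j * g ω p (U r)) atTop (𝓝 0) := by
  have hc : Continuous fun y : ℝ => (y ^ (p - 1) - ω) / q y := by
    have : Continuous fun y : ℝ => y ^ (p - 1) :=
      Real.continuous_rpow_const (by linarith [h.hp])
    exact (by fun_prop : Continuous fun y : ℝ => (y ^ (p - 1) - ω)).div q_cont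
      fun y => (q_pos y).ne'
  have h1 := ((hc.tendsto 0).comp h.U_inf).mul (h.Uinf j)
  rw [mul_zero] at h1
  refine h1.congr fun r => ?_
  simp [g]; ring

lemma G_inf (h : Data k ω p U z φ ψ) (j : ℕ) :
    Tendsto (fun r => r ^ j * G ω p (U r)) atTop (𝓝 0) := by
  have hc : Continuous fun y : ℝ => y * (y ^ (p - 1) / (p + 1) - ω / 2) := by
    have : Continuous fun y : ℝ => y ^ (p - 1) :=
      Real.continuous_rpow_const (by linarith [h.hp])
    fun_prop
  have h1 := ((hc.tendsto 0).comp h.U_inf).mul (h.Uinf j)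
  rw [mul_zero] at h1
  refine h1.congr fun r => ?_
  simp [G]; ring

lemma P_inf (h : Data k ω p U z φ ψ) : Tendsto (P k ω p U z) atTop (𝓝 0) := by
  have e1 := ((h.zinf (k + 1)).mul h.z_inf).add ((h.G_inf (k + 1)).const_mul 2)
  have e2 := ((h.S_inf k).mul h.z_inf).const_mul ((k : ℝ) - 1)
  have := e1.add e2
  simp only [mul_zero, add_zero] at this
  refine this.congr fun r => ?_
  simp [P]; ring

lemma W_inf (h : Data k ω p U z φ ψ) (μ l : ℝ) :
    ∀ ε > 0, ∀ R : ℝ, ∃ r > R, |W k ω p μ l U z φ ψ r| < ε := by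
  intro ε hε R
  have e1 : Tendsto (fun r => |r ^ k * V μ l U z r|) atTop (𝓝 0) := by
    have := (((h.zinf (k + 1)).const_mul μ).add ((h.S_inf k).const_mul l)).abs
    simp only [mul_zero, add_zero, abs_zero] at this
    refine this.congr fun r => ?_
    simp only [V]; congr 1; ring
  have e2 : Tendsto (fun r => |r ^ k * V1 k ω p μ l U z r|) atTop (𝓝 0) := by
    have := (((h.zinf k).const_mul (μ * (1 - k) + l)).sub
      ((h.g_inf (k + 1)).const_mul μ)).abs
    simp only [mul_zero, sub_zero, abs_zero] at this
    refine this.congr fun r => ?_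
    simp only [V1]; congr 1; ring
  obtain ⟨T, hT⟩ := eventually_atTop.1 ((e1.eventually_lt_const one_pos).and
    (e2.eventually_lt_const one_pos))
  obtain ⟨r, hr, hφ, hψ⟩ := h.lim (ε / 2) (by positivity) (max R T)
  refine ⟨r, (le_max_left _ _).trans_lt hr, ?_⟩
  obtain ⟨h1, h2⟩ := hT r ((le_max_right _ _).trans hr.le)
  calc |W k ω p μ l U z φ ψ r| ≤ |(r ^ k * V μ l U z r) * ψ r| + |φ r * (r ^ k * V1 k ω p μ l U z r)| :=
        abs_sub _ _
    _ ≤ 1 * |ψ r| + |φ r| * 1 := by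
        rw [abs_mul _ (ψ r), abs_mul (φ r)]; gcongr
    _ < ε := by linarith

/-- monotone function with zero limit at the left end is nonnegative -/
lemma ge_of_lim0 {f f' : ℝ → ℝ} {b : ℝ} (hb : 0 < b) (h0 : Tendsto f (𝓝[>] 0) (𝓝 0))
    (hd : ∀ r, 0 < r → HasDerivAt f (f' r) r) (hp : ∀ r, 0 < r → r < b → 0 ≤ f' r) : 0 ≤ f b := by
  refine le_of_tendsto h0 ?_
  filter_upwards [Ioo_mem_nhdsGT hb] with s hs
  exact le_of_deriv hs.2.le (fun t ht => (hd t (hs.1.trans_le ht.1)).continuousAt.continuousWithinAt)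
    (fun t ht => hd t (hs.1.trans ht.1)) (fun t ht => hp t (hs.1.trans ht.1) ht.2)

lemma P_nonneg (h : Data k ω p U z φ ψ) {r : ℝ} (hr : 0 < r) : 0 ≤ P k ω p U z r := by
  have hk : (1 : ℝ) ≤ k := by exact_mod_cast h.hk
  by_cases hQ : 0 < Q k ω p (U r)
  · refine ge_of_lim0 hr h.P_lim0 (fun s hs => h.dP hs) fun s hs hsr => ?_
    have := Q_up hk h.hω h.hp (h.Upos r hr) (h.Uanti hs hr hsr) hQ
    positivity
  · refine le_of_tendsto h.P_inf ?_
    filter_upwards [eventually_gt_atTop r] with s hs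
    have := le_of_deriv (f := fun r => - P k ω p U z r) hs.le
      (fun t ht => (h.dP (hr.trans_le ht.1)).neg.continuousAt.continuousWithinAt)
      (fun t ht => (h.dP (hr.trans ht.1)).neg)
      (fun t ht => by
        have ht0 := hr.trans ht.1
        have : Q k ω p (U t) ≤ 0 := by
          by_contra hc
          push Not at hc
          exact hQ (Q_up hk h.hω h.hp (h.Upos t ht0) (h.Uanti hr ht0 ht.1) hc)
        have : 0 ≤ t ^ k * - Q k ω p (U t) := mul_nonneg (by positivity) (by linarith)
        linarith)
    linarith

/-- `r w' / w` is nonincreasing after `r1`. -/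
lemma theta (h : Data k ω p U z φ ψ) {r1 r2 : ℝ} (h1 : 0 < r1) (h12 : r1 ≤ r2)
    (ha1 : ω < U r1 ^ (p - 1)) (hK : 1 < K ω p (U r1)) :
    r2 * z r2 / S (U r2) ≤ r1 * z r1 / S (U r1) := by
  have hd : ∀ r, 0 < r → HasDerivAt (fun r => -(r * z r / S (U r)))
      (-(((1 * z r + r * (-(k / r) * z r - g ω p (U r))) * S (U r) - r * z r * z r)
        / S (U r) ^ 2)) r := fun r hr =>
    (((hasDerivAt_id r).mul (h.dz r hr)).div (h.dw hr) (S_pos (h.Upos r hr)).ne').neg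
  have := le_of_deriv h12
    (fun t ht => (hd t (h1.trans_le ht.1)).continuousAt.continuousWithinAt)
    (fun t ht => hd t (h1.trans ht.1))
    (fun t ht => by
      have ht0 := h1.trans ht.1
      have hS := S_pos (h.Upos t ht0)
      rw [← neg_div]
      apply div_nonneg _ (by positivity)
      have hP := h.P_nonneg ht0
      have hH := H_nonneg h.hω h.hp (h.Upos t ht0) (h.Uanti h1 ht0 ht.1).le ha1 hK
      have e : -((1 * z t + t * (-(k / t) * z t - g ω p (U t))) * S (U t) - t * z t * z t) =
        P k ω p U z t / t ^ k + t * (S (U t) * g ω p (U t) - 2 * G ω p (U t)) := by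
        simp only [P]; field_simp; ring
      rw [e]
      have : 0 ≤ t * (S (U t) * g ω p (U t) - 2 * G ω p (U t)) :=
        mul_nonneg ht0.le (by linarith)
      positivity)
  linarith

lemma firstzero {f : ℝ → ℝ} {a b : ℝ} (hc : ContinuousOn f (Set.Icc a b)) (hab : a ≤ b)
    (ha : 0 < f a) (hb : f b ≤ 0) :
    ∃ c, a < c ∧ c ≤ b ∧ f c = 0 ∧ ∀ x, a ≤ x → x < c → 0 < f x := by
  have hcl : IsCompact (Set.Icc a b ∩ f ⁻¹' Set.Iic 0) :=
    isCompact_Icc.of_isClosed_subset (hc.preimage_isClosed_of_isClosed isClosed_Icc isClosed_Iic)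
      Set.inter_subset_left
  obtain ⟨c, hcm, hl⟩ := hcl.exists_isLeast ⟨b, Set.right_mem_Icc.2 hab, hb⟩
  have hca : a < c := by
    rcases hcm.1.1.eq_or_lt with h | h
    · have := hcm.2; simp only [Set.mem_preimage, Set.mem_Iic, ← h] at this; linarith
    · exact h
  have hpos : ∀ x, a ≤ x → x < c → 0 < f x := by
    intro x hx hxc
    by_contra hn
    push Not at hn
    have := hl ⟨⟨hx, hxc.le.trans hcm.1.2⟩, hn⟩
    linarith
  refine ⟨c, hca, hcm.1.2, le_antisymm hcm.2 ?_, hpos⟩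
  have ht : Tendsto f (𝓝[Set.Icc a c] c) (𝓝 (f c)) :=
    (hc c hcm.1).mono (Set.Icc_subset_Icc le_rfl hcm.1.2)
  have ht2 : Tendsto f (𝓝[Set.Ico a c] c) (𝓝 (f c)) := ht.mono_left
    (nhdsWithin_mono _ Set.Ico_subset_Icc_self)
  have : (𝓝[Set.Ico a c] c).NeBot := by
    rw [nhdsWithin_Ico_eq_nhdsLT hca]; infer_instance
  refine ge_of_tendsto ht2 ?_
  filter_upwards [self_mem_nhdsWithin] with x hx using (hpos x hx.1 hx.2).le

lemma deriv_nonpos_of_pos_left {f : ℝ → ℝ} {a c d : ℝ} (hac : a < c) (hd : HasDerivAt f d c)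
    (h0 : f c = 0) (hpos : ∀ x, a ≤ x → x < c → 0 < f x) : d ≤ 0 := by
  have h1 := hd.hasDerivWithinAt (s := Set.Iio c)
  rw [hasDerivWithinAt_iff_tendsto_slope' (by simp)] at h1
  refine le_of_tendsto h1 ?_
  filter_upwards [Ioo_mem_nhdsLT hac] with x hx
  rw [slope_def_field, h0]
  have := hpos x hx.1.le hx.2
  exact div_nonpos_of_nonneg_of_nonpos (by linarith) (by linarith [hx.2])

lemma neg_right {f : ℝ → ℝ} {c d : ℝ} (hd : HasDerivAt f d c)
    (h0 : f c = 0) (hneg : d < 0) : ∃ δ > 0, ∀ x, c < x → x ≤ c + δ → f x < 0 := by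
  have h1 := hd.hasDerivWithinAt (s := Set.Ioi c)
  rw [hasDerivWithinAt_iff_tendsto_slope' (by simp)] at h1
  have h2 := h1.eventually_lt_const hneg
  rw [eventually_nhdsWithin_iff, Metric.eventually_nhds_iff] at h2
  obtain ⟨ε, hε, h2⟩ := h2
  refine ⟨ε / 2, by positivity, fun x hx hxc => ?_⟩
  have := h2 (y := x) (by rw [Real.dist_eq, abs_of_pos (by linarith)]; linarith) hx
  rw [slope_def_field, h0, sub_zero, div_lt_iff₀ (by linarith)] at this
  linarith

lemma after (h : Data k ω p U z φ ψ) {r1 : ℝ} (h1 : 0 < r1) (hφ : φ r1 = 0) (hψ : ψ r1 < 0)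
    (μ l : ℝ) (hW : 0 ≤ W k ω p μ l U z φ ψ r1)
    (hI : ∀ r, r1 < r → 2 * μ * g ω p (U r) + l * (g ω p (U r) - S (U r) * Gam ω p (U r)) < 0)
    (hV : ∀ r, r1 < r → V μ l U z r ≤ 0) : False := by
  have hc : ∀ a b, r1 ≤ a → ContinuousOn (W k ω p μ l U z φ ψ) (Set.Icc a b) := fun a b ha t ht =>
    (h.dW μ l (h1.trans_le (ha.trans ht.1))).continuousAt.continuousWithinAt
  have hstep : ∀ r, r1 < r → (∀ t, r1 < t → t < r → φ t < 0) → 0 < W k ω p μ l U z φ ψ r := by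
    intro r hr hneg
    refine hW.trans_lt (lt_of_deriv hr (hc _ _ le_rfl) (fun t ht => h.dW μ l (h1.trans ht.1))
      fun t ht => ?_)
    have : 0 < t := h1.trans ht.1
    exact mul_pos (by positivity) (mul_pos_of_neg_of_neg (hneg t ht.1 ht.2) (hI t ht.1))
  by_cases hall : ∀ t, r1 < t → φ t < 0
  · have e := hstep (r1 + 1) (by linarith) (fun t ht _ => hall t ht)
    obtain ⟨r, hr, hr2⟩ := h.W_inf μ l _ e (r1 + 1)
    have := lt_of_deriv hr (hc _ _ (by linarith)) (fun t ht => h.dW μ l (by linarith [ht.1]))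
      fun t ht => by
        have : 0 < t := by linarith [ht.1]
        exact mul_pos (by positivity) (mul_pos_of_neg_of_neg (hall t (by linarith [ht.1]))
          (hI t (by linarith [ht.1])))
    rw [abs_lt] at hr2
    linarith [hr2.2]
  · push Not at hall
    obtain ⟨b, hb, hb2⟩ := hall
    obtain ⟨δ, hδ, hneg⟩ := neg_right (h.dφ r1 h1) hφ hψ
    have hab : r1 + δ < b := by
      by_contra hn
      push Not at hn
      linarith [hneg b hb hn]
    obtain ⟨c, hc1, hc2, hc3, hc4⟩ := firstzero (f := fun r => - φ r) (a := r1 + δ) (b := b)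
      (fun t ht => (h.dφ t (by linarith [ht.1])).neg.continuousAt.continuousWithinAt) hab.le
      (by linarith [hneg (r1 + δ) (by linarith) le_rfl]) (by linarith)
    have hψc := deriv_nonpos_of_pos_left hc1 (h.dφ c (by linarith)).neg hc3 hc4
    have hWc := hstep c (by linarith) (fun t ht htc => by
      rcases le_total t (r1 + δ) with h5 | h5
      · exact hneg t ht h5
      · linarith [hc4 t h5 htc])
    have hφc : φ c = 0 := by linarith
    rw [W, hφc, zero_mul, sub_zero] at hWc
    have hVc := hV c (by linarith)
    have : 0 < c := by linarith
    have h6 : c ^ k * V μ l U z c ≤ 0 := mul_nonpos_of_nonneg_of_nonpos (by positivity) hVc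
    nlinarith

lemma no_pos (h : Data k ω p U z φ ψ) (hpos : ∀ r, 0 < r → 0 < φ r) : False := by
  obtain ⟨j, rfl⟩ : ∃ j, k = j + 1 := ⟨k - 1, by have := h.hk; omega⟩
  set W1 : ℝ → ℝ := fun r => (r ^ (j + 1) * z r) * ψ r +
    φ r * (((j + 1 : ℕ) : ℝ) * (r ^ j * z r) + r ^ (j + 1) * g ω p (U r)) with hW1
  have hd : ∀ r, 0 < r → HasDerivAt W1
      (r ^ (j + 1) * (φ r * (((j + 1 : ℕ) : ℝ) / r ^ 2 * (- z r)))) r := by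
    intro r hr
    have e1 := ((dpow (j + 1) hr).mul (h.dz r hr)).mul (h.dψ r hr)
    have e2 := (h.dφ r hr).mul ((((dpow j hr).mul (h.dz r hr)).const_mul ((j + 1 : ℕ) : ℝ)).add
      ((dpow (j + 1) hr).mul (h.dg hr)))
    refine (e1.add e2).congr_deriv ?_
    simp
    field_simp
    ring
  have hnn : ∀ r, 0 < r → 0 ≤ r ^ (j + 1) * (φ r * (((j + 1 : ℕ) : ℝ) / r ^ 2 * (- z r))) := by
    intro r hr
    have := h.z_nonpos hr
    have e : 0 ≤ - z r := by linarith
    have := hpos r hr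
    positivity
  have h0 : Tendsto W1 (𝓝[>] 0) (𝓝 0) := by
    obtain ⟨a, ha⟩ := h.U_lim0 (g_cont (ω := ω) h.hp)
    obtain ⟨c, hc⟩ := h.φ0
    have e1 : Tendsto (fun r : ℝ => r ^ j) (𝓝[>] 0) (𝓝 (0 ^ j)) := id0.pow j
    have := (((pow0 h.hk).mul h.z0).mul h.psi_lim).add
      (hc.mul (((e1.mul h.z0).const_mul ((j + 1 : ℕ) : ℝ)).add ((pow0 h.hk).mul ha)))
    simpa only [mul_zero, zero_mul, add_zero] using this
  have hinf : ∀ ε > 0, ∀ R : ℝ, ∃ r > R, |W1 r| < ε := by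
    intro ε hε R
    have e1 := (h.zinf (j + 1)).abs
    have e2 := (((h.zinf j).const_mul ((j + 1 : ℕ) : ℝ)).add (h.g_inf (j + 1))).abs
    simp only [mul_zero, add_zero, abs_zero] at e1 e2
    obtain ⟨T, hT⟩ := eventually_atTop.1 ((e1.eventually_lt_const one_pos).and
      (e2.eventually_lt_const one_pos))
    obtain ⟨r, hr, hφ, hψ⟩ := h.lim (ε / 2) (by positivity) (max R T)
    refine ⟨r, (le_max_left _ _).trans_lt hr, ?_⟩
    obtain ⟨h1, h2⟩ := hT r ((le_max_right _ _).trans hr.le)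
    refine (abs_add_le _ _).trans_lt ?_
    rw [abs_mul _ (ψ r), abs_mul (φ r)]
    have i1 := mul_le_mul_of_nonneg_right h1.le (abs_nonneg (ψ r))
    have i2 := mul_le_mul_of_nonneg_left h2.le (abs_nonneg (φ r))
    linarith
  have hzero : ∀ r, 0 < r → W1 r = 0 := by
    intro r hr
    apply le_antisymm
    · by_contra hn
      push Not at hn
      obtain ⟨s, hs, hs2⟩ := hinf _ hn r
      have := le_of_deriv hs.le
        (fun t ht => (hd t (hr.trans_le ht.1)).continuousAt.continuousWithinAt)
        (fun t ht => hd t (hr.trans ht.1)) (fun t ht => hnn t (hr.trans ht.1))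
      rw [abs_lt] at hs2
      linarith [hs2.2]
    · exact ge_of_lim0 hr h0 hd fun r hr _ => hnn r hr
  have hz : ∀ r, 0 < r → z r = 0 := by
    intro r hr
    have e : HasDerivAt W1 0 r := (hasDerivAt_const r (0 : ℝ)).congr_of_eventuallyEq (by
      filter_upwards [lt_mem_nhds hr] with s hs using hzero s hs)
    have := e.unique (hd r hr)
    have e2 := hpos r hr
    have e3 : ((j : ℝ) + 1) ≠ 0 := by positivity
    simpa [hr.ne', e2.ne', e3] using this.symm
  have := le_of_deriv (f := U) (a := 1) (b := 2) (by norm_num)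
    (fun t ht => (h.dU t (by linarith [ht.1])).continuousAt.continuousWithinAt)
    (fun t ht => h.dU t (by linarith [ht.1]))
    (fun t ht => by rw [hz t (by linarith [ht.1])]; simp)
  have := h.Uanti (a := 1) (b := 2) (by simp) (by simp) (by norm_num)
  linarith

lemma main_pos (h : Data k ω p U z φ ψ) {c : ℝ} (hc : 0 < c) (hl : Tendsto φ (𝓝[>] 0) (𝓝 c))
    (hnu : ∀ r, 0 < r → φ r = 0 → ψ r ≠ 0) : False := by
  have h2 := hl.eventually_const_lt hc
  rw [eventually_nhdsWithin_iff, Metric.eventually_nhds_iff] at h2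
  obtain ⟨ε, hε, h2⟩ := h2
  have hpos0 : ∀ s, 0 < s → s ≤ ε / 2 → 0 < φ s := fun s hs hse => h2 (by
    rw [Real.dist_eq, sub_zero, abs_of_pos hs]; linarith) hs
  obtain ⟨b, hb, hb2⟩ : ∃ b, 0 < b ∧ φ b ≤ 0 := by
    by_contra hn
    push Not at hn
    exact h.no_pos hn
  have hab : ε / 2 < b := by
    by_contra hn
    push Not at hn
    linarith [hpos0 b hb hn]
  obtain ⟨r1, h1, -, hφ, hpos1⟩ := firstzero (f := φ) (a := ε / 2) (b := b)
    (fun t ht => (h.dφ t (by linarith [ht.1])).continuousAt.continuousWithinAt) hab.le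
    (hpos0 _ (by positivity) le_rfl) hb2
  have h10 : 0 < r1 := by linarith
  have hψ : ψ r1 < 0 := lt_of_le_of_ne (deriv_nonpos_of_pos_left h1 (h.dφ r1 h10) hφ hpos1)
    (hnu r1 h10 hφ)
  have hpos : ∀ s, 0 < s → s < r1 → 0 < φ s := fun s hs hs1 => by
    rcases le_total s (ε / 2) with h5 | h5
    · exact hpos0 s hs h5
    · exact hpos1 s h5 hs1
  have hp := h.hp
  have hU1 := h.Upos r1 h10
  have hWr : ∀ μ l, W k ω p μ l U z φ ψ r1 = (r1 ^ k * V μ l U z r1) * ψ r1 := by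
    intro μ l; rw [W, hφ]; ring
  have hrk : 0 < r1 ^ k := by positivity
  rcases le_or_gt (U r1 ^ (p - 1)) ω with ha | ha
  · -- case (a)
    have hV : ∀ r, r1 ≤ r → V 1 0 U z r ≤ 0 := by
      intro r hr
      have hr0 := h10.trans_le hr
      have := h.z_nonpos hr0
      simp only [V]
      nlinarith
    refine h.after h10 hφ hψ 1 0 ?_ ?_ fun r hr => hV r hr.le
    · rw [hWr]
      exact mul_nonneg_of_nonpos_of_nonpos
        (mul_nonpos_of_nonneg_of_nonpos hrk.le (hV r1 le_rfl)) hψ.le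
    · intro r hr
      have hr0 := h10.trans hr
      have hlt : U r ^ (p - 1) < U r1 ^ (p - 1) :=
        Real.rpow_lt_rpow (h.Upos r hr0).le (h.Uanti h10 hr0 hr) (by linarith)
      have := g_neg (p := p) (h.Upos r hr0) (hlt.trans_le ha)
      linarith
  · rcases le_or_gt (K ω p (U r1)) 1 with hK | hK
    · -- case (b)
      have hW := ge_of_lim0 (f := fun r => - W k ω p (1 - K ω p (U r1)) (-2) U z φ ψ r) h10
        (by simpa using (h.W_lim0 (1 - K ω p (U r1)) (-2)).neg) (fun r hr => (h.dW _ _ hr).neg)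
        (fun r hr hr1 => by
          have e1 := J_above h.hω hp hU1 (h.Uanti hr h10 hr1) ha
          have e2 := hpos r hr hr1
          rw [← mul_neg, ← mul_neg]
          exact mul_nonneg (by positivity) (mul_nonneg e2.le (by linarith)))
      simp only [hWr] at hW
      have hV : V (1 - K ω p (U r1)) (-2) U z r1 < 0 := by
        have e1 := h.z_nonpos h10
        have e2 := S_pos hU1
        have e3 : r1 * z r1 ≤ 0 := mul_nonpos_of_nonneg_of_nonpos h10.le e1
        simp only [V]
        have e4 : 0 ≤ 1 - K ω p (U r1) := by linarith
        nlinarith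
      have := mul_pos_of_neg_of_neg (mul_neg_of_pos_of_neg hrk hV) hψ
      linarith
    · -- case (c)
      have hW := ge_of_lim0 h10
        (h.W_lim0 (K ω p (U r1) - 1) 2) (fun r hr => (h.dW _ _ hr))
        (fun r hr hr1 => by
          have e1 := J_above h.hω hp hU1 (h.Uanti hr h10 hr1) ha
          have e2 := hpos r hr hr1
          exact mul_nonneg (by positivity) (mul_nonneg e2.le (by linarith)))
      refine h.after h10 hφ hψ _ _ hW ?_ ?_
      · intro r hr
        have hr0 := h10.trans hr
        have := J_below h.hω hp (h.Upos r hr0) (h.Uanti h10 hr0 hr) ha hK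
        linarith
      · intro r hr
        have hr0 := h10.trans hr
        rw [hWr] at hW
        have hV1 : V (K ω p (U r1) - 1) 2 U z r1 ≤ 0 := by
          by_contra hn
          push Not at hn
          have := mul_neg_of_pos_of_neg (mul_pos hrk hn) hψ
          linarith
        have hth := h.theta h10 hr.le ha hK
        have s1 := S_pos hU1
        have s2 := S_pos (h.Upos r hr0)
        have eV : ∀ t, 0 < S (U t) → V (K ω p (U r1) - 1) 2 U z t =
            S (U t) * ((K ω p (U r1) - 1) * (t * z t / S (U t)) + 2) := by
          intro t ht; simp only [V]; field_simp
        rw [eV r1 s1] at hV1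
        rw [eV r s2]
        apply mul_nonpos_of_nonneg_of_nonpos s2.le
        have e5 := nonpos_of_mul_nonpos_right hV1 s1
        have e6 := mul_le_mul_of_nonneg_left hth (by linarith : 0 ≤ K ω p (U r1) - 1)
        linarith

theorem main (h : Data k ω p U z φ ψ) : ∀ r, 0 < r → φ r = 0 := by
  by_contra hcon
  have hnu : ∀ r, 0 < r → φ r = 0 → ψ r ≠ 0 := fun r hr h1 h2 => hcon (h.uniq hr h1 h2)
  obtain ⟨c, hc⟩ := h.φ0
  rcases lt_trichotomy c 0 with h0 | h0 | h0
  · exact h.neg.main_pos (c := -c) (by linarith) hc.neg (fun r hr h1 h2 =>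
      hnu r hr (by simpa using h1) (by simpa using h2))
  · subst h0; exact hcon (h.uniq0 hc)
  · exact h.main_pos h0 hc hnu


end Data

theorem norm_fd {N : ℕ} (x : EuclideanSpace ℝ (Fin N)) (hx : x ≠ 0) :
    HasFDerivAt (fun y : EuclideanSpace ℝ (Fin N) => ‖y‖) ((1 / ‖x‖) • innerSL ℝ x) x := by
  have h1 := (hasStrictFDerivAt_norm_sq (F := EuclideanSpace ℝ (Fin N)) x).hasFDerivAt
  have hn : ‖x‖ ≠ 0 := norm_ne_zero_iff.mpr hx
  have h2 := h1.sqrt (pow_ne_zero 2 hn)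
  have e : (fun y : EuclideanSpace ℝ (Fin N) => √(‖y‖ ^ 2)) = fun y => ‖y‖ := by
    funext y; exact Real.sqrt_sq (norm_nonneg y)
  rw [e] at h2
  refine h2.congr_fderiv ?_
  ext y
  simp [Real.sqrt_sq (norm_nonneg x)]
  field_simp

theorem pd_radial {N : ℕ} (F F1 : ℝ → ℝ) (hF : ∀ r, 0 < r → HasDerivAt F (F1 r) r)
    (i : Fin N) (x : EuclideanSpace ℝ (Fin N)) (hx : x ≠ 0) :
    pd i (fun y : EuclideanSpace ℝ (Fin N) => F ‖y‖) x = F1 ‖x‖ / ‖x‖ * x i := by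
  have h := (hF ‖x‖ (norm_pos_iff.mpr hx)).comp_hasFDerivAt x (norm_fd x hx)
  unfold pd
  have h' : fderiv ℝ (fun y : EuclideanSpace ℝ (Fin N) => F ‖y‖) x = _ := h.fderiv
  rw [h']
  simp [EuclideanSpace.inner_single_right]
  ring

theorem lap_radial {N : ℕ} (F F1 F2 : ℝ → ℝ) (hF : ∀ r, 0 < r → HasDerivAt F (F1 r) r)
    (hF1 : ∀ r, 0 < r → HasDerivAt F1 (F2 r) r)
    (x : EuclideanSpace ℝ (Fin N)) (hx : x ≠ 0) :
    lap (fun y : EuclideanSpace ℝ (Fin N) => F ‖y‖) x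
      = F2 ‖x‖ + ((N : ℝ) - 1) / ‖x‖ * F1 ‖x‖ := by
  have hn : 0 < ‖x‖ := norm_pos_iff.mpr hx
  have key : ∀ i : Fin N, pd i (pd i (fun y : EuclideanSpace ℝ (Fin N) => F ‖y‖)) x
      = F1 ‖x‖ / ‖x‖ + (F2 ‖x‖ / ‖x‖ ^ 2 - F1 ‖x‖ / ‖x‖ ^ 3) * x i ^ 2 := by
    intro i
    have ev : pd i (fun y : EuclideanSpace ℝ (Fin N) => F ‖y‖) =ᶠ[𝓝 x]
        fun y => (F1 ‖y‖ / ‖y‖) * y i := by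
      filter_upwards [isOpen_ne.mem_nhds hx] with y hy
      exact pd_radial F F1 hF i y hy
    have hq : HasDerivAt (fun r => F1 r / r) ((F2 ‖x‖ * ‖x‖ - F1 ‖x‖ * 1) / ‖x‖ ^ 2) ‖x‖ :=
      (hF1 _ hn).div (hasDerivAt_id' _) hn.ne'
    have h1 := hq.comp_hasFDerivAt x (norm_fd x hx)
    have h2 : HasFDerivAt (fun y : EuclideanSpace ℝ (Fin N) => y i)
        (EuclideanSpace.proj (𝕜 := ℝ) i : EuclideanSpace ℝ (Fin N) →L[ℝ] ℝ) x :=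
      (EuclideanSpace.proj (𝕜 := ℝ) i : EuclideanSpace ℝ (Fin N) →L[ℝ] ℝ).hasFDerivAt
    have h3 := h1.mul h2
    have h4 : fderiv ℝ (fun y : EuclideanSpace ℝ (Fin N) => (F1 ‖y‖ / ‖y‖) * y i) x = _ := h3.fderiv
    have : pd i (pd i (fun y : EuclideanSpace ℝ (Fin N) => F ‖y‖)) x
        = fderiv ℝ (fun y : EuclideanSpace ℝ (Fin N) => (F1 ‖y‖ / ‖y‖) * y i) x
          (EuclideanSpace.single i 1) := by
      rw [← ev.fderiv_eq]; rfl
    rw [this, h4]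
    simp [EuclideanSpace.inner_single_right]
    field_simp
  unfold lap
  rw [Finset.sum_congr rfl (fun i _ => key i), Finset.sum_add_distrib, ← Finset.mul_sum]
  have hs : ∑ i, x i ^ 2 = ‖x‖ ^ 2 := (EuclideanSpace.real_norm_sq_eq x).symm
  rw [hs]
  simp
  field_simp
  ring


theorem prof {N : ℕ} (hN : 2 ≤ N) (u : EuclideanSpace ℝ (Fin N) → ℝ) (U : ℝ → ℝ)
    (hs : ContDiff ℝ (⊤ : ℕ∞) u) (hrad : ∀ x, u x = U ‖x‖) :
    (∀ r, 0 < r → HasDerivAt U (deriv U r) r) ∧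
    (∀ r, 0 < r → HasDerivAt (deriv U) (deriv (deriv U) r) r) ∧
    Tendsto U (𝓝[>] 0) (𝓝 (U 0)) ∧ Tendsto (deriv U) (𝓝[>] 0) (𝓝 0) ∧
    (∀ r, 0 < r → ∃ x : EuclideanSpace ℝ (Fin N), ‖x‖ = r ∧ |deriv U r| ≤ ‖fderiv ℝ u x‖) := by
  set e : EuclideanSpace ℝ (Fin N) := EuclideanSpace.single ⟨0, by omega⟩ 1 with he
  have hne : ‖e‖ = 1 := by simp [he]
  set h : ℝ → ℝ := fun t => u (t • e) with hh
  have hsm : ContDiff ℝ (⊤ : ℕ∞) h := by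
    rw [hh]; exact hs.comp (contDiff_id.smul contDiff_const)
  have hd : Differentiable ℝ h := hsm.differentiable (by simp)
  have hsm1 : ContDiff ℝ 2 h := contDiff_infty.mp hsm 2
  have hsm2 : ContDiff ℝ 1 (deriv h) := by
    have : ContDiff ℝ (1 + 1) h := by simpa [one_add_one_eq_two] using hsm1
    exact (contDiff_succ_iff_deriv.mp this).2.2
  have hd2 : Differentiable ℝ (deriv h) := hsm2.differentiable (by simp)
  have hUh : ∀ r, 0 ≤ r → U r = h r := by
    intro r hr
    simp [hh, hrad, norm_smul, hne, abs_of_nonneg hr]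
  have hev : ∀ r, 0 < r → U =ᶠ[𝓝 r] h := by
    intro r hr
    filter_upwards [lt_mem_nhds hr] with s hs
    exact hUh s hs.le
  have hdU : ∀ r, 0 < r → deriv U r = deriv h r := fun r hr => (hev r hr).deriv_eq
  have hev2 : ∀ r, 0 < r → deriv U =ᶠ[𝓝 r] deriv h := by
    intro r hr
    filter_upwards [lt_mem_nhds hr] with s hs
    exact hdU s hs
  have heven : deriv h 0 = 0 := by
    have h1 : (fun t => h (-t)) = h := by
      funext t; simp [hh, hrad, norm_smul]
    have h2 := deriv_comp_neg h 0
    rw [h1] at h2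
    simp at h2
    linarith
  refine ⟨?_, ?_, ?_, ?_, ?_⟩
  · intro r hr
    exact (((hd r).congr_of_eventuallyEq (hev r hr))).hasDerivAt
  · intro r hr
    exact (((hd2 r).congr_of_eventuallyEq (hev2 r hr))).hasDerivAt
  · rw [hUh 0 le_rfl]
    have : Tendsto h (𝓝[>] 0) (𝓝 (h 0)) := hd.continuous.continuousAt.tendsto.mono_left nhdsWithin_le_nhds
    refine this.congr' ?_
    filter_upwards [self_mem_nhdsWithin] with s hs
    exact (hUh s (le_of_lt hs)).symm
  · have : Tendsto (deriv h) (𝓝[>] 0) (𝓝 (deriv h 0)) :=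
      hd2.continuous.continuousAt.tendsto.mono_left nhdsWithin_le_nhds
    rw [heven] at this
    refine this.congr' ?_
    filter_upwards [self_mem_nhdsWithin] with s hs
    exact (hdU s hs).symm
  · intro r hr
    refine ⟨r • e, by simp [norm_smul, hne, abs_of_pos hr], ?_⟩
    rw [hdU r hr]
    have hu1 : HasFDerivAt u (fderiv ℝ u (r • e)) (r • e) :=
      (hs.differentiable (by simp) (r • e)).hasFDerivAt
    have hl : HasDerivAt (fun t : ℝ => t • e) ((1 : ℝ) • e) r := (hasDerivAt_id' r).smul_const e
    have h3 : HasDerivAt h (fderiv ℝ u (r • e) ((1 : ℝ) • e)) r := hu1.comp_hasDerivAt r hl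
    rw [h3.deriv, ← Real.norm_eq_abs]
    refine (ContinuousLinearMap.le_opNorm _ _).trans ?_
    simp [hne]

theorem sq_deriv (U : ℝ → ℝ) (h1 : ∀ r, 0 < r → HasDerivAt U (deriv U r) r)
    (h2 : ∀ r, 0 < r → HasDerivAt (deriv U) (deriv (deriv U) r) r) :
    (∀ r, 0 < r → HasDerivAt (fun s => U s ^ 2) (2 * U r * deriv U r) r) ∧
    (∀ r, 0 < r → HasDerivAt (fun s => 2 * U s * deriv U s)
      (2 * deriv U r ^ 2 + 2 * U r * deriv (deriv U) r) r) := by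
  constructor
  · intro r hr
    refine ((h1 r hr).pow 2).congr_deriv ?_
    simp
  · intro r hr
    refine (((h1 r hr).const_mul 2).mul (h2 r hr)).congr_deriv ?_
    ring

theorem lapRad_sq (N : ℕ) (U : ℝ → ℝ) (h1 : ∀ r, 0 < r → HasDerivAt U (deriv U r) r)
    (h2 : ∀ r, 0 < r → HasDerivAt (deriv U) (deriv (deriv U) r) r) (r : ℝ) (hr : 0 < r) :
    lapRad N (fun s => U s ^ 2) r = 2 * deriv U r ^ 2 + 2 * U r * deriv (deriv U) r
      + ((N : ℝ) - 1) / r * (2 * U r * deriv U r) := by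
  obtain ⟨a, b⟩ := sq_deriv U h1 h2
  have ev : deriv (fun s => U s ^ 2) =ᶠ[𝓝 r] fun s => 2 * U s * deriv U s := by
    filter_upwards [lt_mem_nhds hr] with s hs
    exact (a s hs).deriv
  unfold lapRad
  rw [ev.deriv_eq, (b r hr).deriv, (a r hr).deriv]

theorem qls_rad {N : ℕ} (hN : 2 ≤ N) (ω p : ℝ) (u : EuclideanSpace ℝ (Fin N) → ℝ) (U : ℝ → ℝ)
    (hu : IsGroundState N ω p u) (hrad : ∀ x, u x = U ‖x‖)
    (h1 : ∀ r, 0 < r → HasDerivAt U (deriv U r) r)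
    (h2 : ∀ r, 0 < r → HasDerivAt (deriv U) (deriv (deriv U) r) r) (r : ℝ) (hr : 0 < r) :
    -(deriv (deriv U) r + ((N : ℝ) - 1) / r * deriv U r) - U r * (2 * deriv U r ^ 2
      + 2 * U r * deriv (deriv U) r + ((N : ℝ) - 1) / r * (2 * U r * deriv U r))
      + ω * U r - U r ^ p = 0 := by
  obtain ⟨a, b⟩ := sq_deriv U h1 h2
  set x : EuclideanSpace ℝ (Fin N) := r • EuclideanSpace.single ⟨0, by omega⟩ 1 with hx
  have hn : ‖x‖ = r := by simp [hx, norm_smul, abs_of_pos hr]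
  have hx0 : x ≠ 0 := by rw [← norm_pos_iff, hn]; exact hr
  have hsol := hu.solves x
  have e1 : u = fun y => U ‖y‖ := funext hrad
  have e2 : lap u x = deriv (deriv U) ‖x‖ + ((N : ℝ) - 1) / ‖x‖ * deriv U ‖x‖ := by
    rw [e1]; exact lap_radial U _ _ h1 h2 x hx0
  have e3 : lap (fun y => u y ^ 2) x = (2 * deriv U ‖x‖ ^ 2 + 2 * U ‖x‖ * deriv (deriv U) ‖x‖)
      + ((N : ℝ) - 1) / ‖x‖ * (2 * U ‖x‖ * deriv U ‖x‖) := by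
    rw [e1]; exact lap_radial (fun s => U s ^ 2) _ _ a b x hx0
  rw [e2, e3, hrad x, hn] at hsol
  exact hsol


theorem alg1 (q r k ω U U' U'' P : ℝ) (hq : 0 < q)
    (E1 : q ^ 2 * (U'' + k / r * U') + 2 * U * U' ^ 2 - ω * U + U * P = 0) :
    2 * U / q * U' * U' + q * U'' = -(k / r) * (q * U') - U * (P - ω) / q := by
  generalize k / r = K at *
  have : 2 * U / q * U' * U' + q * U'' - (-K * (q * U') - U * (P - ω) / q)
      = (1 / q) * (q ^ 2 * (U'' + K * U') + 2 * U * U' ^ 2 - ω * U + U * P) := by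
    field_simp
    ring
  rw [E1] at this
  linarith

theorem alg2 (q r k ω p U U' U'' v v' v'' P : ℝ) (hq : 0 < q)
    (E1 : q ^ 2 * (U'' + k / r * U') + 2 * U * U' ^ 2 - ω * U + U * P = 0)
    (E2 : q ^ 2 * (v'' + k / r * v') + 4 * U * U' * v' - ω * v
      + (4 * U * (U'' + k / r * U') + 2 * U' ^ 2 + p * P) * v = 0) :
    ((2 * U' * q - 2 * U * (2 * U / q * U')) / q ^ 2 * U' + 2 * U / q * U'') * v
      + 2 * U / q * U' * v' + (2 * U / q * U' * v' + q * v'')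
      = -(k / r) * (2 * U / q * U' * v + q * v')
        - ((p * P - ω) / q ^ 2 - 2 * U ^ 2 * (P - ω) / q ^ 4) * (q * v) := by
  generalize k / r = K at *
  have : ((2 * U' * q - 2 * U * (2 * U / q * U')) / q ^ 2 * U' + 2 * U / q * U'') * v
      + 2 * U / q * U' * v' + (2 * U / q * U' * v' + q * v'')
      - (-K * (2 * U / q * U' * v + q * v')
        - ((p * P - ω) / q ^ 2 - 2 * U ^ 2 * (P - ω) / q ^ 4) * (q * v))
      = (1 / q) * (q ^ 2 * (v'' + K * v') + 4 * U * U' * v' - ω * v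
      + (4 * U * (U'' + K * U') + 2 * U' ^ 2 + p * P) * v)
      - (2 * U * v / q ^ 3) * (q ^ 2 * (U'' + K * U') + 2 * U * U' ^ 2 - ω * U + U * P) := by
    field_simp
    ring
  rw [E1, E2] at this
  linarith

theorem exp_decay (f : ℝ → ℝ) (C δ : ℝ) (hδ : 0 < δ)
    (hf : ∀ r, 0 < r → |f r| ≤ C * Real.exp (-δ * r)) (j : ℕ) :
    Tendsto (fun r => r ^ j * f r) atTop (𝓝 0) := by
  have h := (tendsto_rpow_mul_exp_neg_mul_atTop_nhds_zero (j : ℝ) δ hδ).const_mul C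
  rw [mul_zero] at h
  refine squeeze_zero_norm' ?_ h
  filter_upwards [eventually_gt_atTop 0] with r hr
  rw [norm_mul, Real.norm_eq_abs, Real.norm_eq_abs, abs_of_pos (pow_pos hr j), Real.rpow_natCast]
  calc r ^ j * |f r| ≤ r ^ j * (C * Real.exp (-δ * r)) :=
        mul_le_mul_of_nonneg_left (hf r hr) (pow_pos hr j).le
    _ = _ := by ring

theorem small_seq (F : ℝ → ℝ) (hF : IntegrableOn F (Set.Ioi 0)) (c : ℝ) (hc : 0 < c) (M : ℝ) :
    ∃ r > M, F r < c := by
  by_contra hcon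
  push Not at hcon
  set M' := max M 0
  have h1 : IntegrableOn F (Set.Ioi M') := hF.mono_set (Set.Ioi_subset_Ioi (le_max_right _ _))
  have h2 : IntegrableOn (fun _ : ℝ => c) (Set.Ioi M') := by
    refine Integrable.mono' h1 aestronglyMeasurable_const ?_
    filter_upwards [ae_restrict_mem measurableSet_Ioi] with r hr
    rw [Real.norm_eq_abs, abs_of_pos hc]
    exact hcon r (lt_of_le_of_lt (le_max_left _ _) hr)
  rw [integrableOn_const_iff] at h2
  rcases h2 with h2 | h2
  · exact hc.ne' (by simpa using h2)
  · simp at h2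

theorem final (k : ℕ) (hk : 1 ≤ k) (ω p : ℝ) (hω : 0 < ω) (hp : 1 < p)
    (u : EuclideanSpace ℝ (Fin (k + 1)) → ℝ) (U : ℝ → ℝ)
    (hu : IsGroundState (k + 1) ω p u)
    (hU : StrictAntiOn U (Set.Ici 0) ∧ (∀ r, 0 ≤ r → 0 < U r) ∧ ∀ x, u x = U ‖x‖)
    (v : ℝ → ℝ) (hvc : ContinuousOn v (Set.Ici 0)) (hv2 : ContDiffOn ℝ 2 v (Set.Ioi 0))
    (hint : IntegrableOn (fun r => ((v r) ^ 2 + (deriv v r) ^ 2) * r ^ k) (Set.Ioi 0))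
    (heq : ∀ r ∈ Set.Ioi (0 : ℝ), LplusRad (k + 1) ω p U 0 v r = 0) :
    ∀ r, 0 ≤ r → v r = 0 := by
  obtain ⟨hanti, hpos, hrad⟩ := hU
  obtain ⟨d1, d2, t0, t1, hfd⟩ := prof (by omega) u U hu.smooth hrad
  have hN : (((k + 1 : ℕ) : ℝ) - 1) = k := by push_cast; ring
  have hE1 : ∀ r, 0 < r → q (U r) ^ 2 * (deriv (deriv U) r + k / r * deriv U r)
      + 2 * U r * deriv U r ^ 2 - ω * U r + U r * U r ^ (p - 1) = 0 := by
    intro r hr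
    have h := qls_rad (by omega) ω p u U hu hrad d1 d2 r hr
    have hP : U r ^ p = U r * U r ^ (p - 1) := by
      have := Real.rpow_add (hpos r hr.le) 1 (p - 1)
      rw [Real.rpow_one] at this
      rw [← this]; congr 1; ring
    rw [hP, hN] at h
    rw [q_sq]
    linear_combination -h
  have hv1 : ∀ r, 0 < r → HasDerivAt v (deriv v r) r := by
    intro r hr
    exact ((hv2.contDiffAt (Ioi_mem_nhds hr)).differentiableAt (by simp)).hasDerivAt
  have hv1' : ∀ r, 0 < r → HasDerivAt (deriv v) (deriv (deriv v) r) r := by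
    intro r hr
    have : ContDiffOn ℝ 1 (deriv v) (Set.Ioi 0) := hv2.deriv_of_isOpen isOpen_Ioi (by norm_num)
    exact ((this.contDiffAt (Ioi_mem_nhds hr)).differentiableAt (by simp)).hasDerivAt
  have hE2 : ∀ r, 0 < r → q (U r) ^ 2 * (deriv (deriv v) r + k / r * deriv v r)
      + 4 * U r * deriv U r * deriv v r - ω * v r
      + (4 * U r * (deriv (deriv U) r + k / r * deriv U r) + 2 * deriv U r ^ 2
        + p * U r ^ (p - 1)) * v r = 0 := by
    intro r hr
    have h := heq r hr
    unfold LplusRad at h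
    rw [lapRad_sq _ U d1 d2 r hr, lapRad, hN] at h
    rw [q_sq]
    simp only [Nat.cast_zero, zero_mul, zero_div] at h
    linear_combination -h
  obtain ⟨C0, hC0, δ0, hδ0, hd0⟩ := hu.decay 0
  obtain ⟨C1, hC1, δ1, hδ1, hd1⟩ := hu.decay 1
  have dec0 : ∀ r, 0 < r → |U r| ≤ C0 * Real.exp (-δ0 * r) := by
    intro r hr
    obtain ⟨x, hx, -⟩ := hfd r hr
    have := hd0 x
    rw [norm_iteratedFDeriv_zero, hrad x, hx, Real.norm_eq_abs] at this
    exact this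
  have dec1 : ∀ r, 0 < r → |deriv U r| ≤ C1 * Real.exp (-δ1 * r) := by
    intro r hr
    obtain ⟨x, hx, hx2⟩ := hfd r hr
    have := hd1 x
    rw [norm_iteratedFDeriv_one, hx] at this
    exact hx2.trans this
  have lim0 := exp_decay U C0 δ0 hδ0 dec0
  have lim1 := exp_decay (deriv U) C1 δ1 hδ1 dec1
  have U00 : Tendsto U atTop (𝓝 0) := by simpa using lim0 0
  have U10 : Tendsto (deriv U) atTop (𝓝 0) := by simpa using lim1 0
  have qinf : Tendsto (fun r => q (U r)) atTop (𝓝 1) := by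
    have h := (q_cont.tendsto 0).comp U00
    have e : q 0 = 1 := by simp [q]
    rw [e] at h; exact h
  have dqU : ∀ r, 0 < r → HasDerivAt (fun s => q (U s)) (2 * U r / q (U r) * deriv U r) r := by
    intro r hr
    exact (q_deriv (U r)).comp r (d1 r hr)
  have hD : Data k ω p U (fun r => q (U r) * deriv U r) (fun r => q (U r) * v r)
      (fun r => 2 * U r / q (U r) * deriv U r * v r + q (U r) * deriv v r) := by
    refine
      { hk := hk, hω := hω, hp := hp, Upos := fun r hr => hpos r hr.le,
        Uanti := hanti.mono Set.Ioi_subset_Ici_self, dU := ?_, dz := ?_, dφ := ?_, dψ := ?_,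
        U0 := ⟨U 0, hpos 0 le_rfl, t0⟩, z0 := ?_, φ0 := ?_, Uinf := lim0, zinf := ?_, lim := ?_ }
    · intro r hr
      refine (d1 r hr).congr_deriv ?_
      have := q_pos (U r)
      field_simp
    · intro r hr
      refine ((dqU r hr).mul (d2 r hr)).congr_deriv ?_
      exact alg1 (q (U r)) r k ω (U r) _ _ _ (q_pos _) (hE1 r hr)
    · intro r hr
      exact (dqU r hr).mul (hv1 r hr)
    · intro r hr
      have hA := ((d1 r hr).const_mul 2).div (dqU r hr) (q_pos (U r)).ne'
      refine (((hA.mul (d2 r hr)).mul (hv1 r hr)).add ((dqU r hr).mul (hv1' r hr))).congr_deriv ?_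
      exact alg2 (q (U r)) r k ω p (U r) _ _ _ _ _ _ (q_pos _) (hE1 r hr) (hE2 r hr)
    · have h := ((q_cont.tendsto (U 0)).comp t0).mul t1
      rw [mul_zero] at h; exact h
    · refine ⟨q (U 0) * v 0, ((q_cont.tendsto (U 0)).comp t0).mul ?_⟩
      exact (hvc 0 Set.self_mem_Ici).mono_left (nhdsWithin_mono _ Set.Ioi_subset_Ici_self)
    · intro j
      have h := qinf.mul (lim1 j)
      rw [mul_zero] at h
      refine h.congr fun r => ?_
      ring
    · intro ε hε R
      have hA : Tendsto (fun r => 2 * U r / q (U r) * deriv U r) atTop (𝓝 0) := by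
        have h := ((U00.const_mul 2).div qinf one_ne_zero).mul U10
        simpa using h
      have ev1 : ∀ᶠ r in atTop, q (U r) < 2 := qinf.eventually_lt_const (by norm_num)
      have ev2 : ∀ᶠ r in atTop, |2 * U r / q (U r) * deriv U r| < 1 := by
        have := hA.abs
        rw [abs_zero] at this
        exact this.eventually_lt_const (by norm_num)
      obtain ⟨T, hT⟩ := eventually_atTop.mp (ev1.and ev2)
      obtain ⟨r, hr, hlt⟩ := small_seq _ hint ((ε / 4) ^ 2) (by positivity) (max (max R 1) T)
      have hrR : R < r := lt_of_le_of_lt ((le_max_left R 1).trans (le_max_left _ _)) hr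
      have hr1 : 1 < r := lt_of_le_of_lt ((le_max_right R 1).trans (le_max_left _ _)) hr
      have hrT : T < r := lt_of_le_of_lt (le_max_right _ _) hr
      obtain ⟨hq2, hA1⟩ := hT r hrT.le
      have hpw : 1 ≤ r ^ k := one_le_pow₀ hr1.le
      have hs : v r ^ 2 + deriv v r ^ 2 < (ε / 4) ^ 2 := by
        have : 0 ≤ v r ^ 2 + deriv v r ^ 2 := by positivity
        nlinarith
      have hvr : |v r| < ε / 4 := abs_lt_of_sq_lt_sq (by nlinarith [sq_nonneg (deriv v r)]) (by positivity)
      have hv'r : |deriv v r| < ε / 4 := abs_lt_of_sq_lt_sq (by nlinarith [sq_nonneg (v r)]) (by positivity)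
      have hq0 := q_pos (U r)
      refine ⟨r, hrR, ?_, ?_⟩
      · show |q (U r) * v r| < ε
        rw [abs_mul, abs_of_pos hq0]
        nlinarith [abs_nonneg (v r)]
      · show |2 * U r / q (U r) * deriv U r * v r + q (U r) * deriv v r| < ε
        refine (abs_add_le _ _).trans_lt ?_
        rw [abs_mul, abs_mul (q (U r)), abs_of_pos hq0]
        nlinarith [abs_nonneg (v r), abs_nonneg (deriv v r)]
  have hz : ∀ r, 0 < r → v r = 0 := by
    intro r hr
    have := hD.main r hr
    exact (mul_eq_zero.mp this).resolve_left (q_pos _).ne'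
  intro r hr
  rcases hr.eq_or_lt with h | h
  · subst h
    have h1 : Tendsto v (𝓝[>] 0) (𝓝 (v 0)) :=
      (hvc 0 Set.self_mem_Ici).mono_left (nhdsWithin_mono _ Set.Ioi_subset_Ici_self)
    have h2 : Tendsto v (𝓝[>] 0) (𝓝 0) := by
      refine tendsto_const_nhds.congr' ?_
      filter_upwards [self_mem_nhdsWithin] with s hs
      exact (hz s hs).symm
    exact tendsto_nhds_unique h1 h2
  · exact hz r h


end GS

/-- A finite-energy radial solution of the radial linearized equation `L₊,₀ v = 0` vanishes identically. -/
theorem stmt7 (N : ℕ) (hN : 2 ≤ N) (ω p : ℝ) (hω : 0 < ω) (hp : 1 < p)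
    (hpmax : 3 ≤ N → p < (3 * (N : ℝ) + 2) / ((N : ℝ) - 2))
    (u : EuclideanSpace ℝ (Fin N) → ℝ) (U : ℝ → ℝ)
    (hu : IsGroundState N ω p u)
    (hU : StrictAntiOn U (Set.Ici 0) ∧ (∀ r, 0 ≤ r → 0 < U r) ∧ ∀ x, u x = U ‖x‖)
    
    (v : ℝ → ℝ) (hvc : ContinuousOn v (Set.Ici 0)) (hv2 : ContDiffOn ℝ 2 v (Set.Ioi 0))
    (hint : IntegrableOn (fun r => ((v r) ^ 2 + (deriv v r) ^ 2) * r ^ (N - 1)) (Set.Ioi 0))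
    (heq : ∀ r ∈ Set.Ioi (0 : ℝ), LplusRad N ω p U 0 v r = 0) :
    ∀ r, 0 ≤ r → v r = 0 := by
  obtain ⟨k, rfl⟩ : ∃ k, N = k + 1 := ⟨N - 1, by omega⟩
  exact GS.final k (by omega) ω p hω hp u U hu hU v hvc hv2 hint heq

end
end

section
/- Let N ≥ 2 be an integer, ω > 0, and 1 < p < p_max, and let U : [0,∞) → (0,∞) be the radial profile of a ground-state profile u of (QLS) (so u(x) = U(|x|)). Suppose v : [0,∞) → ℝ is continuous, twice continuously differentiable on (0,∞), satisfies ∫₀^∞ (v(r)² + v'(r)²) r^{N−1} dr < ∞, and solves L₊,₁ v = 0 on (0,∞) (the radial linearized equation with angular eigenvalue λ₁ = N−1). Then there exists a real number c such that v(r) = c·U'(r) for all r > 0. -/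
open MeasureTheory Real Filter Topology

noncomputable section

lemma hasFDerivAt_norm_aux {N : ℕ} (x : EuclideanSpace ℝ (Fin N)) (hx : x ≠ 0) :
    HasFDerivAt (fun y : EuclideanSpace ℝ (Fin N) => ‖y‖) ((‖x‖)⁻¹ • innerSL ℝ x) x := by
  have h1 := (hasStrictFDerivAt_norm_sq x).hasFDerivAt
  have h0 : ‖x‖ ≠ 0 := norm_ne_zero_iff.mpr hx
  have h2 := h1.sqrt (by positivity)
  have h3 : (fun y : EuclideanSpace ℝ (Fin N) => √(‖y‖ ^ 2)) = fun y => ‖y‖ := by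
    funext y; exact Real.sqrt_sq (norm_nonneg _)
  rw [h3] at h2
  have h4 : (1 / (2 * √(‖x‖ ^ 2))) • 2 • (innerSL ℝ) x = (‖x‖)⁻¹ • innerSL ℝ x := by
    rw [Real.sqrt_sq (norm_nonneg _)]
    ext y
    simp
    field_simp
  rw [h4] at h2
  exact h2

lemma pd_radial {N : ℕ} (f : EuclideanSpace ℝ (Fin N) → ℝ) (g : ℝ → ℝ) (hg : Differentiable ℝ g)
    (hf : ∀ x, f x = g ‖x‖) (i : Fin N) (x : EuclideanSpace ℝ (Fin N)) (hx : x ≠ 0) :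
    pd i f x = deriv g ‖x‖ * ((‖x‖)⁻¹ * x i) := by
  have h : HasFDerivAt (fun y => g ‖y‖) _ x :=
    (hg ‖x‖).hasDerivAt.comp_hasFDerivAt x (hasFDerivAt_norm_aux x hx)
  have hf' : f = fun y => g ‖y‖ := funext hf
  unfold pd
  rw [hf', h.fderiv]
  simp [EuclideanSpace.inner_single_right]

lemma lap_radial {N : ℕ} (f : EuclideanSpace ℝ (Fin N) → ℝ) (g : ℝ → ℝ) (hg : ContDiff ℝ 2 g)
    (hf : ∀ x, f x = g ‖x‖) (x : EuclideanSpace ℝ (Fin N)) (hx : x ≠ 0) :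
    lap f x = lapRad N g ‖x‖ := by
  have hd : Differentiable ℝ g := hg.differentiable (by norm_num)
  have hg1 : ContDiff ℝ 1 (deriv g) := by
    have : ContDiff ℝ (1+1) g := by simpa [one_add_one_eq_two] using hg
    exact (contDiff_succ_iff_deriv.mp this).2.2
  have hd1 : Differentiable ℝ (deriv g) := hg1.differentiable (by norm_num)
  have h0 : ‖x‖ ≠ 0 := norm_ne_zero_iff.mpr hx
  have key : ∀ i : Fin N, pd i (pd i f) x =
      deriv (deriv g) ‖x‖ * ((‖x‖)⁻¹ ^ 2 * (x i) ^ 2) +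
        deriv g ‖x‖ * ((‖x‖)⁻¹ - (‖x‖)⁻¹ ^ 3 * (x i) ^ 2) := by
    intro i
    have hev : pd i f =ᶠ[𝓝 x] fun y => deriv g ‖y‖ * ((‖y‖)⁻¹ * y i) := by
      filter_upwards [isOpen_ne.mem_nhds hx] with y hy
      exact pd_radial f g hd hf i y hy
    have hn := hasFDerivAt_norm_aux x hx
    have h1 : HasFDerivAt (fun y => deriv g ‖y‖) _ x :=
      (hd1 ‖x‖).hasDerivAt.comp_hasFDerivAt x hn
    have h2 : HasFDerivAt (fun y : EuclideanSpace ℝ (Fin N) => (‖y‖)⁻¹) _ x :=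
      (hasDerivAt_inv h0).comp_hasFDerivAt x hn
    have h3 : HasFDerivAt (fun y : EuclideanSpace ℝ (Fin N) => y i)
      (EuclideanSpace.proj i : EuclideanSpace ℝ (Fin N) →L[ℝ] ℝ) x :=
      (EuclideanSpace.proj i : EuclideanSpace ℝ (Fin N) →L[ℝ] ℝ).hasFDerivAt
    have h4 := h1.mul (h2.mul h3)
    have h5 := (h4.congr_of_eventuallyEq hev).fderiv
    unfold pd at h5 ⊢
    rw [h5]
    simp [EuclideanSpace.inner_single_right]
    field_simp
    ring
  have hs : ∑ i : Fin N, (x i) ^ 2 = ‖x‖ ^ 2 := by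
    rw [EuclideanSpace.norm_sq_eq]; simp
  unfold lap lapRad
  simp_rw [key]
  rw [Finset.sum_add_distrib, ← Finset.mul_sum, ← Finset.mul_sum, ← Finset.mul_sum,
    Finset.sum_sub_distrib, ← Finset.mul_sum, hs]
  simp
  field_simp

/-- uniqueness -/
lemma lin_unique (A B w w1 : ℝ → ℝ) (hA : ContinuousOn A (Set.Ioi 0))
    (hB : ContinuousOn B (Set.Ioi 0))
    (hw : ∀ r, 0 < r → HasDerivAt w (w1 r) r)
    (hw1 : ∀ r, 0 < r → HasDerivAt w1 (A r * w1 r + B r * w r) r)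
    (r0 : ℝ) (hr0 : 0 < r0) (h0 : w r0 = 0) (h1 : w1 r0 = 0) :
    ∀ r, 0 < r → w r = 0 := by
  intro r hr
  set a := min r r0 / 2 with ha
  set b := max r r0 + 1 with hb
  have hapos : 0 < a := by positivity
  have hsub : Set.Icc a b ⊆ Set.Ioi 0 := fun t ht => lt_of_lt_of_le hapos ht.1
  have hr_mem : r ∈ Set.Ioo a b := by
    constructor
    · have := min_le_left r r0; linarith
    · have := le_max_left r r0; linarith
  have hr0_mem : r0 ∈ Set.Ioo a b := by
    constructor
    · have := min_le_right r r0; linarith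
    · have := le_max_right r r0; linarith
  obtain ⟨CA, hCA⟩ := isCompact_Icc.exists_bound_of_continuousOn (hA.mono hsub)
  obtain ⟨CB, hCB⟩ := isCompact_Icc.exists_bound_of_continuousOn (hB.mono hsub)
  let F : ℝ → ℝ × ℝ → ℝ × ℝ := fun t y => (y.2, A t * y.2 + B t * y.1)
  let K : NNReal := Real.toNNReal (1 + |CA| + |CB|)
  have hK : (K : ℝ) = 1 + |CA| + |CB| := Real.coe_toNNReal _ (by positivity)
  have hLip : ∀ t ∈ Set.Ioo a b, LipschitzOnWith K (F t) Set.univ := by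
    intro t ht
    apply LipschitzOnWith.of_dist_le_mul
    intro x _ y _
    rw [hK, dist_eq_norm, dist_eq_norm, Prod.norm_def]
    have hx1 : ‖(x - y).1‖ ≤ ‖x - y‖ := norm_fst_le _
    have hx2 : ‖(x - y).2‖ ≤ ‖x - y‖ := norm_snd_le _
    have hn := norm_nonneg (x - y)
    have hA' : ‖A t‖ ≤ |CA| := (hCA t (Set.Ioo_subset_Icc_self ht)).trans (le_abs_self _)
    have hB' : ‖B t‖ ≤ |CB| := (hCB t (Set.Ioo_subset_Icc_self ht)).trans (le_abs_self _)
    apply max_le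
    · have : (F t x - F t y).1 = (x - y).2 := rfl
      rw [this]
      nlinarith [abs_nonneg CA, abs_nonneg CB, mul_nonneg (abs_nonneg CA) hn,
        mul_nonneg (abs_nonneg CB) hn]
    · have : (F t x - F t y).2 = A t * (x - y).2 + B t * (x - y).1 := by
        simp [F]; ring
      rw [this]
      calc _ ≤ ‖A t‖ * ‖(x - y).2‖ + ‖B t‖ * ‖(x - y).1‖ := by
            rw [← norm_mul, ← norm_mul]; exact norm_add_le _ _
        _ ≤ |CA| * ‖x - y‖ + |CB| * ‖x - y‖ := by gcongr
        _ ≤ _ := by nlinarith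
  have := ODE_solution_unique_of_mem_Ioo (v := F) (s := fun _ => Set.univ) (K := K)
    (f := fun t => (w t, w1 t)) (g := fun _ => 0) (a := a) (b := b) (t₀ := r0) hLip hr0_mem
    (fun t ht => ⟨(hw t (hsub (Set.Ioo_subset_Icc_self ht))).prodMk
      (hw1 t (hsub (Set.Ioo_subset_Icc_self ht))), trivial⟩)
    (fun t ht => ⟨by
      have : F t 0 = 0 := by simp [F]
      rw [this]; exact hasDerivAt_const _ _, trivial⟩)
    (by simp [h0, h1])
  have h := this hr_mem
  exact congrArg Prod.fst h

lemma iter_decay {N : ℕ} (u : EuclideanSpace ℝ (Fin N) → ℝ) (hs : ContDiff ℝ (⊤ : ℕ∞) u)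
    (e : EuclideanSpace ℝ (Fin N)) (he : ‖e‖ = 1) (k : ℕ)
    (hd : ∃ C > 0, ∃ δ > 0, ∀ x, ‖iteratedFDeriv ℝ k u x‖ ≤ C * Real.exp (-δ * ‖x‖)) :
    ∃ C > 0, ∃ δ > 0, ∀ r, 0 ≤ r →
      |iteratedDeriv k (fun t : ℝ => u (t • e)) r| ≤ C * Real.exp (-δ * r) := by
  obtain ⟨C, hC, δ, hδ, h⟩ := hd
  refine ⟨C, hC, δ, hδ, fun r hr => ?_⟩
  let Lm : ℝ →L[ℝ] EuclideanSpace ℝ (Fin N) := ContinuousLinearMap.toSpanSingleton ℝ e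
  have h1 := Lm.iteratedFDeriv_comp_right hs r (i := k) (by exact_mod_cast le_top)
  have h2 : (fun t : ℝ => u (t • e)) = u ∘ Lm := by
    funext t; simp [Lm]
  have hL : ‖Lm‖ = 1 := by simp [Lm, he]
  rw [h2, ← Real.norm_eq_abs, ← norm_iteratedFDeriv_eq_norm_iteratedDeriv, h1]
  refine (ContinuousMultilinearMap.norm_compContinuousLinearMap_le _ _).trans ?_
  have h3 := h (Lm r)
  have h4 : ‖Lm r‖ = r := by simp [Lm, norm_smul, he, abs_of_nonneg hr]
  rw [h4] at h3
  simpa [hL] using h3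

lemma core (m : ℕ) (ω p : ℝ) (g : ℝ → ℝ) (hg : ContDiff ℝ (⊤ : ℕ∞) g) (hpos : ∀ r, 0 < g r)
    (hne : g 1 ≠ g 2)
    (hsol : ∀ r, 0 < r → -lapRad (m + 2) g r - g r * lapRad (m + 2) (fun s => g s ^ 2) r
      + ω * g r - (g r) ^ p = 0)
    (hdec : ∀ k, ∃ C > 0, ∃ δ > 0, ∀ r, 0 ≤ r →
      |iteratedDeriv k g r| ≤ C * Real.exp (-δ * r))
    (v : ℝ → ℝ) (hv2 : ContDiffOn ℝ 2 v (Set.Ioi 0))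
    (hint : IntegrableOn (fun r => ((v r) ^ 2 + (deriv v r) ^ 2) * r ^ (m + 1)) (Set.Ioi 0))
    (heq : ∀ r ∈ Set.Ioi (0 : ℝ), LplusRad (m + 2) ω p g 1 v r = 0) :
    ∃ c : ℝ, ∀ r, 0 < r → v r = c * deriv g r := by
  have hg' : ContDiff ℝ 3 g := contDiff_infty.mp hg 3
  have e3 : ContDiff ℝ (2 + 1) g := by norm_num; exact hg'
  have c1 : ContDiff ℝ 2 (deriv g) := (contDiff_succ_iff_deriv.mp e3).2.2
  have e2 : ContDiff ℝ (1 + 1) (deriv g) := by norm_num; exact c1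
  have c2 : ContDiff ℝ 1 (deriv (deriv g)) := (contDiff_succ_iff_deriv.mp e2).2.2
  have d0 : ∀ r, HasDerivAt g (deriv g r) r := fun r =>
    (hg'.differentiable (by norm_num) r).hasDerivAt
  have d1 : ∀ r, HasDerivAt (deriv g) (deriv (deriv g) r) r := fun r =>
    (c1.differentiable (by norm_num) r).hasDerivAt
  have d2 : ∀ r, HasDerivAt (deriv (deriv g)) (deriv (deriv (deriv g)) r) r := fun r =>
    (c2.differentiable (by norm_num) r).hasDerivAt
  have k0 : Continuous g := hg'.continuous
  have k1 : Continuous (deriv g) := c1.continuous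
  have k2 : Continuous (deriv (deriv g)) := c2.continuous
  obtain ⟨C0, hC0, δ0, hδ0, b0⟩ := hdec 0
  obtain ⟨C1, hC1, δ1, hδ1, b1⟩ := hdec 1
  obtain ⟨C2, hC2, δ2, hδ2, b2⟩ := hdec 2
  simp only [iteratedDeriv_succ, iteratedDeriv_zero] at b0 b1 b2
  -- square
  have sq1 : deriv (fun s => g s ^ 2) = fun s => 2 * g s * deriv g s := by
    funext s
    have := ((d0 s).fun_pow 2).deriv
    simpa using this
  have sq2 : deriv (fun s => 2 * g s * deriv g s) =
      fun s => 2 * deriv g s * deriv g s + 2 * g s * deriv (deriv g) s := by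
    funext s
    exact (((d0 s).const_mul 2).mul (d1 s)).deriv
  have cast : ((m + 2 : ℕ) : ℝ) - 1 = m + 1 := by push_cast; ring
  simp only [lapRad, sq1, sq2, cast] at hsol
  simp only [LplusRad, lapRad, sq1, sq2, cast, Nat.cast_one] at heq
  set g1 := deriv g with hg1
  set g2 := deriv g1 with hg2
  set g3 := deriv g2 with hg3
  -- v
  have ev2 : ContDiffOn ℝ (1 + 1) v (Set.Ioi 0) := by
    simpa [one_add_one_eq_two] using hv2
  obtain ⟨hvd, -, hv1⟩ := (contDiffOn_succ_iff_deriv_of_isOpen isOpen_Ioi).mp ev2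
  have dv0 : ∀ r, 0 < r → HasDerivAt v (deriv v r) r := fun r hr =>
    (hvd.differentiableAt (isOpen_Ioi.mem_nhds hr)).hasDerivAt
  have dv1 : ∀ r, 0 < r → HasDerivAt (deriv v) (deriv (deriv v) r) r := fun r hr =>
    ((hv1.differentiableOn (by norm_num)).differentiableAt (isOpen_Ioi.mem_nhds hr)).hasDerivAt
  set v1 := deriv v with hv1d
  set v2 := deriv v1 with hv2d
  -- coefficients
  let A : ℝ → ℝ := fun r => -((m + 1) / r) - 4 * g r * g1 r / (1 + 2 * g r ^ 2)
  let B : ℝ → ℝ := fun r => (m + 1) / r ^ 2 + (ω - (2 * g r * (g2 r + (m + 1) / r * g1 r) +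
    (2 * g1 r * g1 r + 2 * g r * g2 r + (m + 1) / r * (2 * g r * g1 r)) + p * g r ^ (p - 1)))
      / (1 + 2 * g r ^ 2)
  have hspos : ∀ r, 0 < 1 + 2 * g r ^ 2 := fun r => by positivity
  have hne0 : ∀ r ∈ Set.Ioi (0:ℝ), r ≠ 0 := fun r hr => ne_of_gt hr
  have hrp : Continuous fun r => g r ^ (p - 1) :=
    k0.rpow_const fun r => Or.inl (hpos r).ne'
  have hA : ContinuousOn A (Set.Ioi 0) := by
    have i1 : ContinuousOn (fun r : ℝ => (m + 1 : ℝ) / r) (Set.Ioi 0) :=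
      continuousOn_const.div continuousOn_id hne0
    exact i1.neg.sub (((continuous_const.mul k0).mul k1).continuousOn.div
      (by fun_prop) fun r _ => (hspos r).ne')
  have hB : ContinuousOn B (Set.Ioi 0) := by
    have i1 : ContinuousOn (fun r : ℝ => (m + 1 : ℝ) / r) (Set.Ioi 0) :=
      continuousOn_const.div continuousOn_id hne0
    have i2 : ContinuousOn (fun r : ℝ => (m + 1 : ℝ) / r ^ 2) (Set.Ioi 0) :=
      continuousOn_const.div (by fun_prop) fun r hr => pow_ne_zero 2 (hne0 r hr)
    have j0 := k0.continuousOn (s := Set.Ioi 0)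
    have j1 := k1.continuousOn (s := Set.Ioi 0)
    have j2 := k2.continuousOn (s := Set.Ioi 0)
    have j3 := hrp.continuousOn (s := Set.Ioi 0)
    refine i2.add (ContinuousOn.div ?_ (by fun_prop) fun r _ => (hspos r).ne')
    fun_prop
  have hvA : ∀ r, 0 < r → v2 r = A r * v1 r + B r * v r := by
    intro r hr
    have h := heq r hr
    have := (hspos r).ne'
    have := hr.ne'
    simp only [A, B]
    push_cast at h
    field_simp
    field_simp at h
    linear_combination (-1) * h
  have hgA : ∀ r, 0 < r → g3 r = A r * g2 r + B r * g1 r := by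
    intro r hr
    have hE : HasDerivAt (fun r => -(g2 r + (m + 1) / r * g1 r) - g r *
      (2 * g1 r * g1 r + 2 * g r * g2 r + (m + 1) / r * (2 * g r * g1 r)) + ω * g r - g r ^ p)
      _ r :=
      ((((d2 r).add ((((hasDerivAt_id r).fun_inv hr.ne').const_mul (m + 1 : ℝ)).mul (d1 r))).neg.sub
        ((d0 r).mul ((((d1 r).const_mul 2).mul (d1 r)).add (((d0 r).const_mul 2).mul (d2 r)) |>.add
          ((((hasDerivAt_id r).fun_inv hr.ne').const_mul (m + 1 : ℝ)).mul
            (((d0 r).const_mul 2).mul (d1 r)))))).add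
        ((d0 r).const_mul ω)).sub ((d0 r).rpow_const (p := p) (Or.inl (hpos r).ne'))
    have hZ : (fun r => -(g2 r + (m + 1) / r * g1 r) - g r *
      (2 * g1 r * g1 r + 2 * g r * g2 r + (m + 1) / r * (2 * g r * g1 r)) + ω * g r - g r ^ p)
       =ᶠ[𝓝 r] fun _ => 0 := by
      filter_upwards [isOpen_Ioi.mem_nhds hr] with t ht
      exact hsol t ht
    have h := hE.unique ((hasDerivAt_const r (0:ℝ)).congr_of_eventuallyEq hZ)
    have := (hspos r).ne'
    have := hr.ne'
    simp only [A, B]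
    simp only [id, Pi.add_apply, Pi.mul_apply] at h
    field_simp
    field_simp at h
    linear_combination (-1) * h
  -- Wronskian
  let W : ℝ → ℝ := fun r => r ^ (m + 1) * (1 + 2 * g r ^ 2) * (v r * g2 r - v1 r * g1 r)
  have hW : ∀ r, 0 < r → HasDerivAt W 0 r := by
    intro r hr
    have h := (((hasDerivAt_pow (m + 1) r)).mul ((((d0 r).pow 2).const_mul 2).const_add 1)).mul
      (((dv0 r hr).mul (d2 r)).sub ((dv1 r hr).mul (d1 r)))
    refine h.congr_deriv ?_
    rw [hgA r hr, hvA r hr]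
    have := (hspos r).ne'
    have := hr.ne'
    simp only [A]
    simp
    field_simp
    ring
  have hWc : ∀ r, 0 < r → W r = W 1 := by
    intro r hr
    exact isOpen_Ioi.is_const_of_deriv_eq_zero isPreconnected_Ioi
      (fun t ht => (hW t ht).differentiableAt.differentiableWithinAt)
      (fun t ht => (hW t ht).deriv) hr (show (1:ℝ) ∈ Set.Ioi 0 by simp)
  have hexp : ∀ δ : ℝ, 0 < δ →
      IntegrableOn (fun r : ℝ => r ^ (m + 1) * Real.exp (-δ * r)) (Set.Ioi 0) := by
    intro δ hδ
    have h := integrableOn_rpow_mul_exp_neg_mul_rpow (s := (m + 1 : ℕ)) (p := 1) (b := δ)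
      (by have : (0:ℝ) ≤ (m + 1 : ℕ) := Nat.cast_nonneg _
          linarith) (by norm_num) hδ
    refine h.congr_fun (fun r hr => ?_) measurableSet_Ioi
    simp only [Real.rpow_natCast, Real.rpow_one]
  have hW0 : W 1 = 0 := by
    by_contra hc
    have hI := ((((hexp δ1 hδ1).const_mul C1).add ((hexp δ2 hδ2).const_mul C2)).add
      (hint.const_mul (C1 + C2))).const_mul (1 + 2 * C0 ^ 2)
    have hI2 : IntegrableOn (fun _ : ℝ => W 1) (Set.Ioi 0) := by
      refine hI.mono' (by fun_prop) ?_
      refine (ae_restrict_iff' measurableSet_Ioi).mpr (Eventually.of_forall fun r hr => ?_)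
      have hr : 0 < r := hr
      rw [← hWc r hr]
      simp only [W, Pi.add_apply, norm_mul, Real.norm_eq_abs]
      rw [abs_of_pos (hspos r), abs_of_pos (pow_pos hr _)]
      have x0 : 1 + 2 * g r ^ 2 ≤ 1 + 2 * C0 ^ 2 := by
        have h1 := b0 r hr.le
        have h2 : Real.exp (-δ0 * r) ≤ 1 := Real.exp_le_one_iff.mpr (by nlinarith)
        have h3 : |g r| ≤ C0 := h1.trans (by nlinarith)
        have := sq_le_sq' (abs_le.mp h3).1 (abs_le.mp h3).2
        linarith
      have x1 := b1 r hr.le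
      have x2 := b2 r hr.le
      have E1 : Real.exp (-δ1 * r) ≤ 1 := Real.exp_le_one_iff.mpr (by nlinarith)
      have E2 : Real.exp (-δ2 * r) ≤ 1 := Real.exp_le_one_iff.mpr (by nlinarith)
      have P1 := Real.exp_pos (-δ1 * r)
      have P2 := Real.exp_pos (-δ2 * r)
      set X1 := Real.exp (-δ1 * r)
      set X2 := Real.exp (-δ2 * r)
      have hv_ : |v r| ≤ 1 + (v r ^ 2 + v1 r ^ 2) := by
        rw [← sq_abs (v r)]; nlinarith [sq_nonneg (|v r| - 1), sq_nonneg (v1 r), abs_nonneg (v r)]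
      have hv1_ : |v1 r| ≤ 1 + (v r ^ 2 + v1 r ^ 2) := by
        rw [← sq_abs (v1 r)]; nlinarith [sq_nonneg (|v1 r| - 1), sq_nonneg (v r), abs_nonneg (v1 r)]
      set S := v r ^ 2 + v1 r ^ 2
      have hS : 0 ≤ S := by positivity
      have hD : |v r * g2 r - v1 r * g1 r| ≤ C1 * X1 + C2 * X2 + (C1 + C2) * S := by
        calc |v r * g2 r - v1 r * g1 r| ≤ |v r| * |g2 r| + |v1 r| * |g1 r| := by
              rw [← abs_mul, ← abs_mul]; exact abs_sub _ _
          _ ≤ (1 + S) * (C2 * X2) + (1 + S) * (C1 * X1) := by gcongr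
          _ ≤ _ := by
            have y1 : S * (C1 * X1) ≤ S * (C1 * 1) := by gcongr
            have y2 : S * (C2 * X2) ≤ S * (C2 * 1) := by gcongr
            nlinarith
      calc r ^ (m + 1) * (1 + 2 * g r ^ 2) * |v r * g2 r - v1 r * g1 r|
          ≤ r ^ (m + 1) * (1 + 2 * C0 ^ 2) * (C1 * X1 + C2 * X2 + (C1 + C2) * S) := by gcongr
        _ = _ := by ring
    rw [integrableOn_const_iff] at hI2
    simp [hc] at hI2
  -- a point with nonzero derivative
  obtain ⟨r0, hr0, hs⟩ := exists_deriv_eq_slope g (show (1:ℝ) < 2 by norm_num) k0.continuousOn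
    (fun t _ => (d0 t).differentiableAt.differentiableWithinAt)
  have hr0p : 0 < r0 := by linarith [hr0.1]
  have hgr0 : g1 r0 ≠ 0 := by
    rw [hg1, hs]
    intro h
    norm_num at h
    exact hne (by linarith)
  refine ⟨v r0 / g1 r0, fun r hr => ?_⟩
  have hWr0 : v r0 * g2 r0 - v1 r0 * g1 r0 = 0 := by
    have h := (hWc r0 hr0p).trans hW0
    simp only [W, mul_eq_zero] at h
    rcases h with (h | h) | h
    · exact absurd h (pow_pos hr0p _).ne'
    · exact absurd h (hspos r0).ne'
    · exact h
  have hfin := lin_unique A B (fun r => v r - v r0 / g1 r0 * g1 r)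
    (fun r => v1 r - v r0 / g1 r0 * g2 r) hA hB
    (fun r hr => (dv0 r hr).sub ((d1 r).const_mul _))
    (fun r hr => ((dv1 r hr).sub ((d2 r).const_mul _)).congr_deriv (by
      rw [hgA r hr, hvA r hr]; ring))
    r0 hr0p (by field_simp; ring) (by field_simp; linarith) r hr
  linarith

/-- A finite-energy solution of the radial linearized equation `L₊,₁ v = 0` is a multiple of `U'`. -/
theorem stmt8 (N : ℕ) (hN : 2 ≤ N) (ω p : ℝ) (hω : 0 < ω) (hp : 1 < p)
    (hpmax : 3 ≤ N → p < (3 * (N : ℝ) + 2) / ((N : ℝ) - 2))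
    (u : EuclideanSpace ℝ (Fin N) → ℝ) (U : ℝ → ℝ)
    (hu : IsGroundState N ω p u)
    (hU : StrictAntiOn U (Set.Ici 0) ∧ (∀ r, 0 ≤ r → 0 < U r) ∧ ∀ x, u x = U ‖x‖)
    
    (v : ℝ → ℝ) (hvc : ContinuousOn v (Set.Ici 0)) (hv2 : ContDiffOn ℝ 2 v (Set.Ioi 0))
    (hint : IntegrableOn (fun r => ((v r) ^ 2 + (deriv v r) ^ 2) * r ^ (N - 1)) (Set.Ioi 0))
    (heq : ∀ r ∈ Set.Ioi (0 : ℝ), LplusRad N ω p U 1 v r = 0) :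
    ∃ c : ℝ, ∀ r, 0 < r → v r = c * deriv U r := by

  obtain ⟨m, rfl⟩ : ∃ m, N = m + 2 := ⟨N - 2, by omega⟩
  obtain ⟨hanti, hUpos, hUu⟩ := hU
  let e : EuclideanSpace ℝ (Fin (m + 2)) := EuclideanSpace.single 0 1
  have he : ‖e‖ = 1 := by simp [e]
  let g : ℝ → ℝ := fun t => u (t • e)
  have hgs : ContDiff ℝ (⊤ : ℕ∞) g := hu.smooth.comp (contDiff_id.smul contDiff_const)
  have hgU : ∀ r, 0 ≤ r → g r = U r := fun r hr => by
    simp only [g]; rw [hUu, norm_smul, he, mul_one, Real.norm_of_nonneg hr]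
  have hug : ∀ x, u x = g ‖x‖ := fun x => by rw [hgU _ (norm_nonneg _), hUu]
  have ev : ∀ r, 0 < r → g =ᶠ[𝓝 r] U := fun r hr => by
    filter_upwards [isOpen_Ioi.mem_nhds hr] with t ht
    exact hgU t (le_of_lt ht)
  have hdU : ∀ r, 0 < r → deriv U r = deriv g r := fun r hr => (ev r hr).deriv_eq.symm
  have hddU : ∀ r, 0 < r → deriv (deriv U) r = deriv (deriv g) r := fun r hr =>
    (ev r hr).deriv.deriv_eq.symm
  have ev' : ∀ r, 0 < r → (fun s => g s ^ 2) =ᶠ[𝓝 r] fun s => U s ^ 2 := fun r hr => by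
    filter_upwards [ev r hr] with t ht
    rw [ht]
  have h2 : ContDiff ℝ 2 g := contDiff_infty.mp hgs 2
  obtain ⟨c, hc⟩ := core m ω p g hgs (fun r => hu.pos _)
    (by
      rw [hgU 1 (by norm_num), hgU 2 (by norm_num)]
      exact (hanti (show (0:ℝ) ≤ 1 by norm_num) (show (0:ℝ) ≤ 2 by norm_num) (by norm_num)).ne')
    (fun r hr => by
      have hx : r • e ≠ 0 := by
        intro h
        have := congrArg norm h
        rw [norm_smul, he, mul_one, Real.norm_of_nonneg hr.le, norm_zero] at this
        exact hr.ne' this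
      have hn : ‖r • e‖ = r := by rw [norm_smul, he, mul_one, Real.norm_of_nonneg hr.le]
      have h := hu.solves (r • e)
      rw [lap_radial u g h2 hug _ hx, lap_radial (fun y => u y ^ 2) (fun s => g s ^ 2)
        (h2.pow 2) (fun x => by simp only [hug]) _ hx, hug, hn] at h
      exact h)
    (fun k => iter_decay u hu.smooth e he k (hu.decay k))
    v hv2 hint
    (fun r hr => by
      have h := heq r hr
      have e1 := (ev' r hr).deriv_eq
      have e2 := (ev' r hr).deriv.deriv_eq
      simp only [LplusRad, lapRad] at h ⊢
      rw [hdU r hr, hddU r hr, ← hgU r (le_of_lt hr), ← e1, ← e2] at h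
      exact h)
  exact ⟨c, fun r hr => by rw [hdU r hr]; exact hc r hr⟩

end
end

section
/- Let N ≥ 2 be an integer, ω > 0, and 1 < p < p_max, and let U : [0,∞) → (0,∞) be the radial profile of a ground-state profile u of (QLS). Suppose v : [0,∞) → ℝ is continuous, twice continuously differentiable on (0,∞), satisfies ∫₀^∞ (v(r)² + v'(r)²) r^{N−1} dr < ∞, and solves L₋,₀ v = 0 on (0,∞), i.e. −v'' − ((N−1)/r)v' + ωv − ((Δ_r(U²))(r) + U(r)^{p−1})v = 0. Then there exists a real number c such that v(r) = c·U(r) for all r ≥ 0. -/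
open MeasureTheory Real Filter Topology

noncomputable section

lemma aux_norm {N : ℕ} (x : EuclideanSpace ℝ (Fin N)) (hx : x ≠ 0) :
    ∃ L : EuclideanSpace ℝ (Fin N) →L[ℝ] ℝ, HasFDerivAt (fun y : EuclideanSpace ℝ (Fin N) => ‖y‖) L x ∧
      ∀ i, L (EuclideanSpace.single i 1) = x i / ‖x‖ := by
  have hn : ‖x‖ ≠ 0 := norm_ne_zero_iff.mpr hx
  have h1 := (hasStrictFDerivAt_norm_sq x).hasFDerivAt.sqrt (by positivity)
  have h2 : (fun y : EuclideanSpace ℝ (Fin N) => √(‖y‖ ^ 2)) = fun y => ‖y‖ := by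
    funext y; exact Real.sqrt_sq (norm_nonneg y)
  rw [h2] at h1
  refine ⟨_, h1, fun i => ?_⟩
  rw [Real.sqrt_sq (norm_nonneg x)]
  simp [EuclideanSpace.inner_single_right]
  field_simp

lemma aux_coord {N : ℕ} (i : Fin N) (x : EuclideanSpace ℝ (Fin N)) :
    HasFDerivAt (fun y : EuclideanSpace ℝ (Fin N) => y i)
      (EuclideanSpace.proj i : EuclideanSpace ℝ (Fin N) →L[ℝ] ℝ) x :=
  (EuclideanSpace.proj i : EuclideanSpace ℝ (Fin N) →L[ℝ] ℝ).hasFDerivAt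

lemma aux_pd {N : ℕ} (g : ℝ → ℝ) (hg : ∀ r, 0 < r → DifferentiableAt ℝ g r)
    (i : Fin N) (x : EuclideanSpace ℝ (Fin N)) (hx : x ≠ 0) :
    pd i (fun y => g ‖y‖) x = deriv g ‖x‖ * (x i / ‖x‖) := by
  obtain ⟨L, hL, hLi⟩ := aux_norm x hx
  have hn : 0 < ‖x‖ := norm_pos_iff.mpr hx
  have h := (hg _ hn).hasDerivAt.comp_hasFDerivAt x hL
  unfold pd
  have h' : fderiv ℝ (fun y => g ‖y‖) x = _ := h.fderiv
  rw [h']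
  simp [hLi]

lemma aux_lap {N : ℕ} (g : ℝ → ℝ) (hg : ∀ r, 0 < r → DifferentiableAt ℝ g r)
    (hg2 : ∀ r, 0 < r → DifferentiableAt ℝ (deriv g) r)
    (x : EuclideanSpace ℝ (Fin N)) (hx : x ≠ 0) :
    lap (fun y => g ‖y‖) x = lapRad N g ‖x‖ := by
  obtain ⟨L, hL, hLi⟩ := aux_norm x hx
  have hn : 0 < ‖x‖ := norm_pos_iff.mpr hx
  have key : ∀ i : Fin N, pd i (pd i (fun y : EuclideanSpace ℝ (Fin N) => g ‖y‖)) x =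
      (deriv (deriv g) ‖x‖ / ‖x‖ ^ 2 - deriv g ‖x‖ / ‖x‖ ^ 3) * (x i) ^ 2
        + deriv g ‖x‖ / ‖x‖ := by
    intro i
    have he : pd i (fun y : EuclideanSpace ℝ (Fin N) => g ‖y‖) =ᶠ[𝓝 x]
        fun y => deriv g ‖y‖ * (y i * ‖y‖⁻¹) := by
      filter_upwards [isOpen_ne.mem_nhds hx] with y hy
      rw [aux_pd g hg i y hy, div_eq_mul_inv]
    have h1 : HasFDerivAt (fun y : EuclideanSpace ℝ (Fin N) => deriv g ‖y‖) _ x :=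
      (hg2 _ hn).hasDerivAt.comp_hasFDerivAt x hL
    have h2 : HasFDerivAt (fun y : EuclideanSpace ℝ (Fin N) => ‖y‖⁻¹) _ x :=
      (hasDerivAt_inv hn.ne').comp_hasFDerivAt x hL
    have h3 := h1.mul ((aux_coord i x).mul h2)
    unfold pd at he ⊢
    rw [he.fderiv_eq]
    have h3' : fderiv ℝ (fun y : EuclideanSpace ℝ (Fin N) => deriv g ‖y‖ * (y i * ‖y‖⁻¹)) x = _ :=
      h3.fderiv
    rw [h3']
    simp [hLi]
    field_simp
    ring
  unfold lap
  rw [Finset.sum_congr rfl (fun i _ => key i), Finset.sum_add_distrib, ← Finset.mul_sum,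
    ← EuclideanSpace.real_norm_sq_eq]
  simp [lapRad]
  field_simp
  ring

/-- A finite-energy solution of the radial linearized equation `L₋,₀ v = 0` is a multiple of `U`. -/
theorem stmt10 (N : ℕ) (hN : 2 ≤ N) (ω p : ℝ) (hω : 0 < ω) (hp : 1 < p)
    (hpmax : 3 ≤ N → p < (3 * (N : ℝ) + 2) / ((N : ℝ) - 2))
    (u : EuclideanSpace ℝ (Fin N) → ℝ) (U : ℝ → ℝ)
    (hu : IsGroundState N ω p u)
    (hU : StrictAntiOn U (Set.Ici 0) ∧ (∀ r, 0 ≤ r → 0 < U r) ∧ ∀ x, u x = U ‖x‖)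
    
    (v : ℝ → ℝ) (hvc : ContinuousOn v (Set.Ici 0)) (hv2 : ContDiffOn ℝ 2 v (Set.Ioi 0))
    (hint : IntegrableOn (fun r => ((v r) ^ 2 + (deriv v r) ^ 2) * r ^ (N - 1)) (Set.Ioi 0))
    (heq : ∀ r ∈ Set.Ioi (0 : ℝ), LminusRad N ω p U 0 v r = 0) :
    ∃ c : ℝ, ∀ r, 0 ≤ r → v r = c * U r := by
  obtain ⟨hanti, hpos, hrad⟩ := hU
  have hN0 : 0 < N := by omega
  let e : EuclideanSpace ℝ (Fin N) := EuclideanSpace.single ⟨0, hN0⟩ 1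
  have hne : ‖e‖ = 1 := by simp [e]
  have hre : ∀ r : ℝ, 0 ≤ r → ‖r • e‖ = r := by
    intro r hr
    rw [norm_smul, hne, Real.norm_eq_abs, abs_of_nonneg hr, mul_one]
  let W : ℝ → ℝ := fun r => u (r • e)
  have hWs : ContDiff ℝ 2 W := by
    have h1 : ContDiff ℝ 2 u := hu.smooth.of_le (WithTop.coe_le_coe.mpr (le_top : (2 : ℕ∞) ≤ ⊤))
    exact h1.comp (contDiff_id.smul contDiff_const)
  have hUW : ∀ r, 0 ≤ r → U r = W r := by
    intro r hr
    simp only [W]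
    rw [hrad, hre r hr]
  have hUev : ∀ r, 0 < r → U =ᶠ[𝓝 r] W := by
    intro r hr
    filter_upwards [Ioi_mem_nhds hr] with s hs using hUW s (le_of_lt hs)
  have hUat : ∀ r, 0 < r → ContDiffAt ℝ 2 U r := fun r hr =>
    hWs.contDiffAt.congr_of_eventuallyEq (hUev r hr)
  have hd1 : ∀ {f : ℝ → ℝ} {r : ℝ}, ContDiffAt ℝ 2 f r → DifferentiableAt ℝ f r :=
    fun h => h.differentiableAt (by norm_num)
  have hd2 : ∀ {f : ℝ → ℝ} {r : ℝ}, ContDiffAt ℝ 2 f r → DifferentiableAt ℝ (deriv f) r :=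
    fun h => ((h.fderiv_right (m := 1) (by norm_num)).differentiableAt
      (by norm_num)).clm_apply (differentiableAt_const (1 : ℝ))
  have hvat : ∀ r, 0 < r → ContDiffAt ℝ 2 v r := fun r hr =>
    hv2.contDiffAt (Ioi_mem_nhds hr)
  -- equation for U
  have hUeq : ∀ r, 0 < r → LminusRad N ω p U 0 U r = 0 := by
    intro r hr
    have hx : r • e ≠ 0 := by
      rw [← norm_ne_zero_iff, hre r hr.le]; exact hr.ne'
    have hs := hu.solves (r • e)
    have hu1 : u = fun y => U ‖y‖ := funext hrad
    have hl1 : lap u (r • e) = lapRad N U r := by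
      rw [hu1, aux_lap U (fun r hr => hd1 (hUat r hr)) (fun r hr => hd2 (hUat r hr)) _ hx,
        hre r hr.le]
    have hl2 : lap (fun y => (u y) ^ 2) (r • e) = lapRad N (fun s => U s ^ 2) r := by
      rw [hu1]
      have := aux_lap (N := N) (fun s => U s ^ 2) (fun r hr => hd1 ((hUat r hr).pow 2))
        (fun r hr => hd2 ((hUat r hr).pow 2)) _ hx
      rw [hre r hr.le] at this
      exact this
    rw [hl1, hl2, hrad, hre r hr.le] at hs
    have hpw : U r ^ p = U r ^ (p - 1) * U r := by
      rw [← Real.rpow_add_one (hpos r hr.le).ne']; congr 1; ring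
    rw [hpw] at hs
    unfold LminusRad
    have : lapRad N U r = deriv (deriv U) r + ((N : ℝ) - 1) / r * deriv U r := rfl
    rw [this] at hs
    simp only [Nat.cast_zero, zero_mul, zero_div, add_zero]
    linarith
  -- the Wronskian
  let w : ℝ → ℝ := fun r => r ^ (N - 1) * (deriv v r * U r - v r * deriv U r)
  have hw' : ∀ r, 0 < r → HasDerivAt w 0 r := by
    intro r hr
    have h1 := (hd1 (hvat r hr)).hasDerivAt
    have h2 := (hd2 (hvat r hr)).hasDerivAt
    have h3 := (hd1 (hUat r hr)).hasDerivAt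
    have h4 := (hd2 (hUat r hr)).hasDerivAt
    have h5 := (hasDerivAt_pow (N - 1) r).mul ((h2.mul h3).sub (h1.mul h4))
    refine h5.congr_deriv ?_
    have e1 := heq r hr
    have e2 := hUeq r hr
    unfold LminusRad at e1 e2
    have hc : ((N - 1 : ℕ) : ℝ) = (N : ℝ) - 1 := by
      rw [Nat.cast_sub (by omega)]; simp
    have hpw : r ^ (N - 1) = r ^ (N - 1 - 1) * r := by
      rw [← pow_succ]; congr 1; omega
    simp only [Pi.mul_apply, Pi.sub_apply]
    rw [hc, hpw]
    simp only [Nat.cast_zero, zero_mul, zero_div, add_zero] at e1 e2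
    set q := ω - (lapRad N (fun s => U s ^ 2) r + U r ^ (p - 1)) with hq
    have f1 : deriv (deriv v) r = q * v r - ((N : ℝ) - 1) / r * deriv v r := by
      rw [hq]; linarith
    have f2 : deriv (deriv U) r = q * U r - ((N : ℝ) - 1) / r * deriv U r := by
      rw [hq]; linarith
    rw [f1, f2]
    field_simp
    ring
  have hwc : ∀ r, 0 < r → w r = w 1 := by
    intro r hr
    refine (convex_Ioi (0:ℝ)).is_const_of_fderivWithin_eq_zero (𝕜 := ℝ) (f := w) ?_ ?_ hr
      (Set.mem_Ioi.mpr one_pos)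
    · intro s hs
      exact (hw' s hs).differentiableAt.differentiableWithinAt
    · intro s hs
      have := (hw' s hs).hasFDerivAt.hasFDerivWithinAt (s := Set.Ioi 0)
      rw [this.fderivWithin (isOpen_Ioi.uniqueDiffWithinAt hs)]
      ext; simp
  -- decay
  obtain ⟨C0, hC0, δ0, hδ0, hdec0⟩ := hu.decay 0
  obtain ⟨C1, hC1, δ1, hδ1, hdec1⟩ := hu.decay 1
  have hb0 : ∀ r, 0 < r → |U r| ≤ C0 * Real.exp (-δ0 * r) := by
    intro r hr
    have := hdec0 (r • e)
    rw [norm_iteratedFDeriv_zero, hrad, hre r hr.le] at this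
    exact this
  have hb1 : ∀ r, 0 < r → |deriv U r| ≤ C1 * Real.exp (-δ1 * r) := by
    intro r hr
    have h1 := hdec1 (r • e)
    rw [norm_iteratedFDeriv_one, hre r hr.le] at h1
    refine le_trans ?_ h1
    have h2 : HasDerivAt W (fderiv ℝ u (r • e) e) r := by
      have ha : HasDerivAt (fun s : ℝ => s • e) ((1:ℝ) • e) r := (hasDerivAt_id r).smul_const e
      rw [one_smul] at ha
      have hb : DifferentiableAt ℝ u (r • e) := hu.smooth.differentiable (by simp) _
      exact hb.hasFDerivAt.comp_hasDerivAt r ha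
    rw [(hUev r hr).deriv_eq, h2.deriv]
    have := (fderiv ℝ u (r • e)).le_opNorm e
    rwa [hne, mul_one] at this
  have hI : ∀ C δ : ℝ, 0 < δ → IntegrableOn
      (fun r : ℝ => r ^ (N - 1) * (C * Real.exp (-δ * r)) ^ 2) (Set.Ioi 0) := by
    intro C δ hδ
    have h := integrableOn_rpow_mul_exp_neg_mul_rpow (s := ((N - 1 : ℕ) : ℝ)) (p := 1) (b := 2 * δ)
      (by have : (0:ℝ) ≤ ((N - 1 : ℕ) : ℝ) := Nat.cast_nonneg _
          linarith) one_pos (by positivity)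
    refine (h.const_mul (C ^ 2)).congr ?_
    refine Filter.Eventually.of_forall fun r => ?_
    simp only [Real.rpow_natCast, Real.rpow_one]
    rw [mul_pow, ← Real.exp_nat_mul]
    push_cast
    ring_nf
  have hC : w 1 = 0 := by
    by_contra hne0
    have hbig := (hint.add (hI C0 δ0 hδ0)).add (hI C1 δ1 hδ1)
    have hconst : IntegrableOn (fun _ : ℝ => w 1) (Set.Ioi 0) := by
      refine Integrable.mono' hbig aestronglyMeasurable_const ?_
      filter_upwards [ae_restrict_mem measurableSet_Ioi] with r hr
      have hr : 0 < r := hr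
      rw [← hwc r hr]
      have p0 : 0 ≤ r ^ (N - 1) := by positivity
      have q0 : U r ^ 2 ≤ (C0 * Real.exp (-δ0 * r)) ^ 2 :=
        sq_le_sq' (abs_le.mp (hb0 r hr)).1 (abs_le.mp (hb0 r hr)).2
      have q1 : deriv U r ^ 2 ≤ (C1 * Real.exp (-δ1 * r)) ^ 2 :=
        sq_le_sq' (abs_le.mp (hb1 r hr)).1 (abs_le.mp (hb1 r hr)).2
      simp only [Pi.add_apply, w]
      rw [Real.norm_eq_abs, abs_mul, abs_of_nonneg p0]
      have q2 : |deriv v r * U r - v r * deriv U r| ≤ (v r ^ 2 + deriv v r ^ 2) + U r ^ 2 + deriv U r ^ 2 := by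
        rw [abs_le]
        constructor <;> nlinarith [sq_nonneg (deriv v r + U r), sq_nonneg (deriv v r - U r),
          sq_nonneg (v r + deriv U r), sq_nonneg (v r - deriv U r)]
      calc r ^ (N - 1) * |deriv v r * U r - v r * deriv U r|
          ≤ r ^ (N - 1) * ((v r ^ 2 + deriv v r ^ 2) + (C0 * Real.exp (-δ0 * r)) ^ 2
            + (C1 * Real.exp (-δ1 * r)) ^ 2) := by
              apply mul_le_mul_of_nonneg_left _ p0; linarith
        _ = _ := by ring
    rw [integrableOn_const_iff] at hconst
    simp [hne0] at hconst
  -- conclusion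
  have hq : ∀ r, 0 < r → HasDerivAt (fun s => v s / U s) 0 r := by
    intro r hr
    have h1 := (hd1 (hvat r hr)).hasDerivAt
    have h3 := (hd1 (hUat r hr)).hasDerivAt
    refine (h1.div h3 (hpos r hr.le).ne').congr_deriv ?_
    have h5 : w r = 0 := by rw [hwc r hr, hC]
    have h6 : deriv v r * U r - v r * deriv U r = 0 := by
      rcases mul_eq_zero.mp h5 with h | h
      · exact absurd h (by positivity)
      · exact h
    rw [h6, zero_div]
  have hqc : ∀ r, 0 < r → v r / U r = v 1 / U 1 := by
    intro r hr
    refine (convex_Ioi (0:ℝ)).is_const_of_fderivWithin_eq_zero (𝕜 := ℝ)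
      (f := fun s => v s / U s) ?_ ?_ hr (Set.mem_Ioi.mpr one_pos)
    · intro s hs
      exact (hq s hs).differentiableAt.differentiableWithinAt
    · intro s hs
      have := (hq s hs).hasFDerivAt.hasFDerivWithinAt (s := Set.Ioi 0)
      rw [this.fderivWithin (isOpen_Ioi.uniqueDiffWithinAt hs)]
      ext; simp
  have hvp : ∀ r, 0 < r → v r = v 1 / U 1 * U r := by
    intro r hr
    rw [← hqc r hr, div_mul_cancel₀ _ (hpos r hr.le).ne']
  refine ⟨v 1 / U 1, fun r hr => ?_⟩
  rcases hr.lt_or_eq with hr | hr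
  · exact hvp r hr
  · subst hr
    have t1 : Tendsto v (𝓝[>] 0) (𝓝 (v 0)) :=
      (hvc 0 (Set.mem_Ici.mpr le_rfl)).mono_left (nhdsWithin_mono _ Set.Ioi_subset_Ici_self)
    have t2 : Tendsto (fun r => v 1 / U 1 * W r) (𝓝[>] 0) (𝓝 (v 1 / U 1 * W 0)) :=
      ((hWs.continuous.tendsto 0).mono_left nhdsWithin_le_nhds).const_mul _
    rw [hUW 0 le_rfl]
    refine tendsto_nhds_unique t1 (t2.congr' ?_)
    filter_upwards [self_mem_nhdsWithin] with r hr
    rw [hvp r hr, hUW r (le_of_lt hr)]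

end
end

section
/- Let N ≥ 2 be an integer, ω > 0, and 1 < p < p_max, let k ≥ 1 be an integer, and let U : [0,∞) → (0,∞) be the radial profile of a ground-state profile u of (QLS). Suppose v : [0,∞) → ℝ is continuous, twice continuously differentiable on (0,∞), satisfies ∫₀^∞ (v(r)² + v'(r)²) r^{N−1} dr < ∞, and solves L₋,ₖ v = 0 on (0,∞) with angular eigenvalue λ_k = k(N+k−2) > 0. Then v is identically zero. -/
open MeasureTheory Real Filter Topology

noncomputable section

lemma absA (Q D g : ℝ → ℝ) (hQ : ∀ r, 0 < r → HasDerivAt Q (D r) r)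
    (hD : ∀ r, 0 < r → 0 ≤ D r) (hg0 : ∀ r, 0 < r → 0 ≤ g r)
    (hQD : ∀ r, 0 < r → Q r ^ 2 ≤ g r * D r)
    (hgM : ∀ R, 0 < R → ∃ M, 0 < M ∧ ∀ r, 0 < r → r ≤ R → g r ≤ M * r)
    (hgc : ContinuousOn g (Set.Ioi 0)) (hgi : IntegrableOn g (Set.Ioi 0)) :
    ∀ r, 0 < r → Q r = 0 := by
  have hmono : MonotoneOn Q (Set.Ioi 0) := by
    apply monotoneOn_of_deriv_nonneg (convex_Ioi 0)
    · exact fun r hr => (hQ r hr).continuousAt.continuousWithinAt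
    · rw [interior_Ioi]
      exact fun r hr => (hQ r hr).differentiableAt.differentiableWithinAt
    · rw [interior_Ioi]
      intro r hr
      rw [(hQ r hr).deriv]
      exact hD r hr
  have key : ∀ r, 0 < r → Q r ≠ 0 → 0 < g r ∧ 1 / g r ≤ D r / Q r ^ 2 := by
    intro r hr hne
    have h2 : 0 < Q r ^ 2 := by positivity
    have h3 := hQD r hr
    have hg : 0 < g r := by
      rcases (hg0 r hr).lt_or_eq with h | h
      · exact h
      · rw [← h] at h3; linarith
    refine ⟨hg, ?_⟩
    rw [div_le_div_iff₀ hg h2]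
    linarith
  have hinv : ∀ r, 0 < r → Q r ≠ 0 → HasDerivAt (fun s => -(Q s)⁻¹) (D r / Q r ^ 2) r := by
    intro r hr hne
    have := ((hQ r hr).inv hne).neg
    have e : D r / Q r ^ 2 = -(-D r / Q r ^ 2) := by ring
    rw [e]
    exact this
  intro r₀ hr₀
  by_contra hne
  rcases lt_or_gt_of_ne hne with hlt | hgt
  · obtain ⟨M, hM, hgM⟩ := hgM r₀ hr₀
    have hneg : ∀ r, 0 < r → r ≤ r₀ → Q r < 0 := fun r hr h =>
      lt_of_le_of_lt (hmono hr hr₀ h) hlt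
    have hm : MonotoneOn (fun s => -(Q s)⁻¹ - M⁻¹ * Real.log s) (Set.Ioc 0 r₀) := by
      have hd : ∀ r, 0 < r → r ≤ r₀ → HasDerivAt (fun s => -(Q s)⁻¹ - M⁻¹ * Real.log s)
          (D r / Q r ^ 2 - M⁻¹ * r⁻¹) r := fun r hr h =>
        (hinv r hr (hneg r hr h).ne).sub ((Real.hasDerivAt_log hr.ne').const_mul _)
      apply monotoneOn_of_deriv_nonneg (convex_Ioc 0 r₀)
      · exact fun r hr => (hd r hr.1 hr.2).continuousAt.continuousWithinAt
      · exact fun r hr => (hd r (interior_subset hr).1 (interior_subset hr).2).differentiableAt.differentiableWithinAt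
      · intro r hr
        have hr := interior_subset hr
        rw [(hd r hr.1 hr.2).deriv]
        have h1 := key r hr.1 (hneg r hr.1 hr.2).ne
        have h2 : 1 / (M * r) ≤ 1 / g r := one_div_le_one_div_of_le h1.1 (hgM r hr.1 hr.2)
        have h3 : M⁻¹ * r⁻¹ = 1 / (M * r) := by rw [one_div, mul_inv]
        rw [h3]
        linarith [h1.2]
    have hT := Real.tendsto_log_nhdsGT_zero
    set c := -(Q r₀)⁻¹ - M⁻¹ * Real.log r₀ with hc
    have hev := hT.eventually (eventually_lt_atBot (-(M * c)))
    have hev2 : ∀ᶠ r in 𝓝[>] (0:ℝ), r ∈ Set.Ioc 0 r₀ := Ioc_mem_nhdsGT hr₀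
    obtain ⟨r, h1, h2⟩ := (hev.and hev2).exists
    have h3 := hm h2 ⟨hr₀, le_rfl⟩ h2.2
    simp only at h3
    rw [← hc] at h3
    have h4 : (Q r)⁻¹ < 0 := inv_lt_zero.2 (hneg r h2.1 h2.2)
    have h5 : M⁻¹ * Real.log r < M⁻¹ * (-(M * c)) := by gcongr
    have h6 : M⁻¹ * (-(M * c)) = - c := by field_simp
    linarith
  · have hpos : ∀ r, r₀ ≤ r → 0 < Q r := fun r h =>
      lt_of_lt_of_le hgt (hmono hr₀ (lt_of_lt_of_le hr₀ h) h)
    have hii : ∀ r, r₀ ≤ r → IntervalIntegrable g volume r₀ r := fun r h => by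
      rw [intervalIntegrable_iff_integrableOn_Ioc_of_le h]
      exact hgi.mono_set fun x hx => lt_trans hr₀ hx.1
    have hG : ∀ r, r₀ ≤ r → HasDerivAt (fun s => ∫ t in r₀..s, g t) (g r) r := fun r h => by
      have hr : 0 < r := lt_of_lt_of_le hr₀ h
      apply intervalIntegral.integral_hasDerivAt_right (hii r h)
      · exact hgc.stronglyMeasurableAtFilter isOpen_Ioi r hr
      · exact hgc.continuousAt (Ioi_mem_nhds hr)
    have hm : MonotoneOn (fun s => -(Q s)⁻¹ + (∫ t in r₀..s, g t) - 2 * s) (Set.Ici r₀) := by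
      have hd : ∀ r, r₀ ≤ r → HasDerivAt (fun s => -(Q s)⁻¹ + (∫ t in r₀..s, g t) - 2 * s)
          (D r / Q r ^ 2 + g r - 2 * 1) r := fun r h =>
        ((hinv r (lt_of_lt_of_le hr₀ h) (hpos r h).ne').add (hG r h)).sub
          ((hasDerivAt_id r).const_mul 2)
      apply monotoneOn_of_deriv_nonneg (convex_Ici r₀)
      · exact fun r hr => (hd r hr).continuousAt.continuousWithinAt
      · exact fun r hr => (hd r (interior_subset hr)).differentiableAt.differentiableWithinAt
      · intro r hr
        have hr : r₀ ≤ r := interior_subset hr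
        rw [(hd r hr).deriv]
        have h1 := key r (lt_of_lt_of_le hr₀ hr) (hpos r hr).ne'
        have h2 : 2 ≤ 1 / g r + g r := by
          have := h1.1
          rw [div_add' _ _ _ this.ne', le_div_iff₀ this]
          nlinarith [sq_nonneg (g r - 1)]
        linarith [h1.2]
    have hI : ∀ r, r₀ ≤ r → (∫ t in r₀..r, g t) ≤ ∫ t in Set.Ioi 0, g t := fun r h => by
      rw [intervalIntegral.integral_of_le h]
      apply setIntegral_mono_set hgi
      · exact (ae_restrict_iff' measurableSet_Ioi).2 (Eventually.of_forall fun x hx => hg0 x hx)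
      · exact Eventually.of_forall fun x hx => lt_trans hr₀ hx.1
    set I := ∫ t in Set.Ioi 0, g t
    have hI0 : 0 ≤ I := by simpa using hI r₀ le_rfl
    have hq : 0 < (Q r₀)⁻¹ := inv_pos.2 hgt
    have hr1 : r₀ ≤ r₀ + (I + (Q r₀)⁻¹) := by linarith
    have h3 := hm (Set.self_mem_Ici) hr1 hr1
    simp only [intervalIntegral.integral_same] at h3
    have h4 := hI _ hr1
    have h5 := inv_pos.2 (hpos _ hr1)
    linarith

lemma hasF_norm {N : ℕ} (x : EuclideanSpace ℝ (Fin N)) (hx : x ≠ 0) :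
    HasFDerivAt (fun y : EuclideanSpace ℝ (Fin N) => ‖y‖) (‖x‖⁻¹ • innerSL ℝ x) x := by
  have h := ((hasStrictFDerivAt_norm_sq x).hasFDerivAt).sqrt (by positivity)
  have h2 : (fun y : EuclideanSpace ℝ (Fin N) => √(‖y‖ ^ 2)) = fun y => ‖y‖ := by
    ext y; simp
  rw [h2] at h
  have e : ‖x‖⁻¹ • innerSL ℝ x = (1 / (2 * √(‖x‖ ^ 2))) • 2 • innerSL ℝ x := by
    rw [Real.sqrt_sq (norm_nonneg x), ← Nat.cast_smul_eq_nsmul ℝ, smul_smul]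
    congr 1
    have : ‖x‖ ≠ 0 := norm_ne_zero_iff.2 hx
    push_cast
    field_simp
  rw [e]
  exact h

lemma pd_rad {N : ℕ} (F : ℝ → ℝ) (a : ℝ) (x : EuclideanSpace ℝ (Fin N)) (hx : x ≠ 0) (i : Fin N)
    (hF : HasDerivAt F a ‖x‖) : pd i (fun y => F ‖y‖) x = a * (x i / ‖x‖) := by
  have h : HasFDerivAt (fun y : EuclideanSpace ℝ (Fin N) => F ‖y‖) _ x :=
    hF.comp_hasFDerivAt x (hasF_norm x hx)
  rw [pd, h.fderiv]
  simp [EuclideanSpace.inner_single_right]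
  left; ring

lemma lap_rad {N : ℕ} (F : ℝ → ℝ) (x : EuclideanSpace ℝ (Fin N)) (hx : x ≠ 0)
    (hF : ∀ r, 0 < r → DifferentiableAt ℝ F r)
    (hF2 : ∀ r, 0 < r → DifferentiableAt ℝ (deriv F) r) :
    lap (fun y => F ‖y‖) x = lapRad N F ‖x‖ := by
  have hr : 0 < ‖x‖ := norm_pos_iff.2 hx
  have key : ∀ i, pd i (pd i (fun y : EuclideanSpace ℝ (Fin N) => F ‖y‖)) x =
      (deriv (deriv F) ‖x‖ / ‖x‖ ^ 2 - deriv F ‖x‖ / ‖x‖ ^ 3) * (x i) ^ 2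
        + deriv F ‖x‖ / ‖x‖ := by
    intro i
    have he : pd i (fun y : EuclideanSpace ℝ (Fin N) => F ‖y‖) =ᶠ[𝓝 x]
        fun y => (deriv F ‖y‖ * ‖y‖⁻¹) * y i := by
      filter_upwards [isOpen_ne.mem_nhds hx] with y hy
      rw [pd_rad F _ y hy i (hF _ (norm_pos_iff.2 hy)).hasDerivAt]
      ring
    rw [pd, he.fderiv_eq]
    have h1 : HasFDerivAt (fun y : EuclideanSpace ℝ (Fin N) => deriv F ‖y‖ * ‖y‖⁻¹) _ x :=
      (((hF2 _ hr).hasDerivAt).mul (hasDerivAt_inv hr.ne')).comp_hasFDerivAt x (hasF_norm x hx)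
    have h2 : HasFDerivAt (fun y : EuclideanSpace ℝ (Fin N) => y i)
      (EuclideanSpace.proj i : EuclideanSpace ℝ (Fin N) →L[ℝ] ℝ) x :=
      (EuclideanSpace.proj i : EuclideanSpace ℝ (Fin N) →L[ℝ] ℝ).hasFDerivAt
    have h3 : HasFDerivAt (fun y : EuclideanSpace ℝ (Fin N) => deriv F ‖y‖ * ‖y‖⁻¹ * y i) _ x :=
      h1.mul h2
    rw [h3.fderiv]
    simp [EuclideanSpace.inner_single_right]
    field_simp
    ring
  rw [lap, Finset.sum_congr rfl fun i _ => key i, Finset.sum_add_distrib, ← Finset.mul_sum,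
    ← EuclideanSpace.real_norm_sq_eq, lapRad]
  simp
  field_simp
  ring

lemma U_reg {N : ℕ} (hN : 2 ≤ N) (u : EuclideanSpace ℝ (Fin N) → ℝ) (U : ℝ → ℝ)
    (hs : ContDiff ℝ (⊤ : ℕ∞) u) (hU : ∀ x, u x = U ‖x‖) :
    ∀ r, 0 < r → DifferentiableAt ℝ U r ∧ DifferentiableAt ℝ (deriv U) r := by
  have h0 : 0 < N := by omega
  let e : EuclideanSpace ℝ (Fin N) := EuclideanSpace.single ⟨0, h0⟩ 1
  let φ : ℝ → ℝ := fun r => u (r • e)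
  have hφ : ContDiff ℝ (⊤ : ℕ∞) φ := by
    apply hs.comp
    fun_prop
  have hφ2 : ContDiff ℝ 2 φ := contDiff_infty.1 hφ 2
  have heq : ∀ r, 0 < r → U =ᶠ[𝓝 r] φ := by
    intro r hr
    filter_upwards [Ioi_mem_nhds hr] with s hs
    have hs : 0 < s := hs
    simp [φ, hU, norm_smul, e, abs_of_pos hs]
  intro r hr
  refine ⟨(hφ2.differentiable (by norm_num) r).congr_of_eventuallyEq (heq r hr), ?_⟩
  have h1 : ContDiff ℝ 1 (deriv φ) := by
    have : ContDiff ℝ (1 + 1) φ := by rw [one_add_one_eq_two]; exact hφ2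
    exact (contDiff_succ_iff_deriv.1 this).2.2
  exact (h1.differentiable (by norm_num) r).congr_of_eventuallyEq (heq r hr).deriv

lemma U_eq {N : ℕ} (hN : 2 ≤ N) (ω p : ℝ) (u : EuclideanSpace ℝ (Fin N) → ℝ) (U : ℝ → ℝ)
    (hu : IsGroundState N ω p u) (hpos : ∀ r, 0 ≤ r → 0 < U r) (hU : ∀ x, u x = U ‖x‖)
    (r : ℝ) (hr : 0 < r) :
    lapRad N U r = (ω - (lapRad N (fun s => U s ^ 2) r + U r ^ (p - 1))) * U r := by
  have h0 : 0 < N := by omega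
  have hreg := U_reg hN u U hu.smooth hU
  let x : EuclideanSpace ℝ (Fin N) := r • EuclideanSpace.single ⟨0, h0⟩ 1
  have hx : ‖x‖ = r := by simp [x, norm_smul, abs_of_pos hr]
  have hx0 : x ≠ 0 := by rw [← norm_pos_iff, hx]; exact hr
  have huf : u = fun y => U ‖y‖ := funext hU
  have h1 : lap u x = lapRad N U r := by
    rw [huf, lap_rad U x hx0 (fun r hr => (hreg r hr).1) (fun r hr => (hreg r hr).2), hx]
  have h2 : lap (fun y => u y ^ 2) x = lapRad N (fun s => U s ^ 2) r := by
    rw [huf, lap_rad (fun s => U s ^ 2) x hx0 (fun r hr => (hreg r hr).1.pow 2), hx]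
    intro r hr
    have he : deriv (fun s => U s ^ 2) =ᶠ[𝓝 r] fun s => 2 * U s * deriv U s := by
      filter_upwards [Ioi_mem_nhds hr] with s hs
      have h : HasDerivAt (fun s => U s ^ 2) _ s := ((hreg s hs).1.hasDerivAt).pow 2
      rw [h.deriv]
      simp
    exact (((hreg r hr).1.const_mul 2).mul (hreg r hr).2).congr_of_eventuallyEq he
  have h3 := hu.solves x
  have hUr := hpos r hr.le
  rw [h1, h2, hU x, hx] at h3
  have h4 : U r ^ p = U r ^ (p - 1) * U r := by
    rw [Real.rpow_sub_one hUr.ne']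
    field_simp
  rw [h4] at h3
  linarith

/-- For `k ≥ 1`, a finite-energy solution of the radial linearized equation `L₋,ₖ v = 0` vanishes identically. -/
theorem stmt11 (N : ℕ) (hN : 2 ≤ N) (ω p : ℝ) (hω : 0 < ω) (hp : 1 < p)
    (hpmax : 3 ≤ N → p < (3 * (N : ℝ) + 2) / ((N : ℝ) - 2))
    (u : EuclideanSpace ℝ (Fin N) → ℝ) (U : ℝ → ℝ)
    (hu : IsGroundState N ω p u)
    (hU : StrictAntiOn U (Set.Ici 0) ∧ (∀ r, 0 ≤ r → 0 < U r) ∧ ∀ x, u x = U ‖x‖)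
    (k : ℕ) (hk : 1 ≤ k)
    (v : ℝ → ℝ) (hvc : ContinuousOn v (Set.Ici 0)) (hv2 : ContDiffOn ℝ 2 v (Set.Ioi 0))
    (hint : IntegrableOn (fun r => ((v r) ^ 2 + (deriv v r) ^ 2) * r ^ (N - 1)) (Set.Ioi 0))
    (heq : ∀ r ∈ Set.Ioi (0 : ℝ), LminusRad N ω p U k v r = 0) :
    ∀ r, 0 ≤ r → v r = 0 := by
  have hpos := hU.2.1
  have hreg := U_reg hN u U hu.smooth hU.2.2
  obtain ⟨n, rfl⟩ : ∃ n, N = n + 1 := ⟨N - 1, by omega⟩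
  have hn : 1 ≤ n := by omega
  simp only [Nat.add_sub_cancel] at hint
  set lam : ℝ := (k : ℝ) * (((n + 1 : ℕ) : ℝ) + (k : ℝ) - 2) with hlam
  have hlam0 : 0 < lam := by
    have h1 : (1 : ℝ) ≤ k := by exact_mod_cast hk
    have h2 : (1 : ℝ) ≤ n := by exact_mod_cast hn
    rw [hlam]
    push_cast
    apply mul_pos <;> linarith
  have hv1 : ∀ r, 0 < r → DifferentiableAt ℝ v r := fun r hr =>
    (hv2.differentiableOn (by norm_num)).differentiableAt (Ioi_mem_nhds hr)
  have hv1' : ∀ r, 0 < r → DifferentiableAt ℝ (deriv v) r := by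
    have : ContDiffOn ℝ (1 + 1) v (Set.Ioi 0) := by rw [one_add_one_eq_two]; exact hv2
    have h := ((contDiffOn_succ_iff_deriv_of_isOpen isOpen_Ioi).1 this).2.2
    exact fun r hr => (h.differentiableOn (by norm_num)).differentiableAt (Ioi_mem_nhds hr)
  let Q : ℝ → ℝ := fun r => r ^ n * (v r * deriv v r - v r ^ 2 * (deriv U r / U r))
  let D : ℝ → ℝ := fun r =>
    r ^ n * ((deriv v r - v r * (deriv U r / U r)) ^ 2 + lam / r ^ 2 * v r ^ 2)
  let g : ℝ → ℝ := fun r => v r ^ 2 * r ^ n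
  have hQ : ∀ r, 0 < r → HasDerivAt Q (D r) r := by
    intro r hr
    have hUr := hpos r hr.le
    have hE := U_eq hN ω p u U hu hpos hU.2.2 r hr
    have hV := heq r hr
    rw [LminusRad, ← hlam] at hV
    set q := lapRad (n + 1) (fun s => U s ^ 2) r + U r ^ (p - 1) with hq
    rw [lapRad] at hE
    have a := (hv1 r hr).hasDerivAt
    have b := (hv1' r hr).hasDerivAt
    have c := (hreg r hr).1.hasDerivAt
    have d := (hreg r hr).2.hasDerivAt
    have h : HasDerivAt Q _ r :=
      (hasDerivAt_pow n r).mul ((a.mul b).sub ((a.pow 2).mul (d.div c hUr.ne')))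
    refine h.congr_deriv ?_
    have e1 : deriv (deriv v) r = (lam / r ^ 2 + ω - q) * v r - n / r * deriv v r := by
      push_cast at hV
      linear_combination -hV
    have e2 : deriv (deriv U) r = (ω - q) * U r - n / r * deriv U r := by
      push_cast at hE
      linear_combination hE
    have e3 : (n : ℝ) * r ^ (n - 1) = n / r * r ^ n := by
      obtain ⟨m, rfl⟩ : ∃ m, n = m + 1 := ⟨n - 1, by omega⟩
      simp only [Nat.add_sub_cancel]
      field_simp
      ring
    simp only [D, Pi.mul_apply, Pi.sub_apply, Pi.pow_apply, Pi.div_apply]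
    rw [e3, e1, e2]
    field_simp
    ring
  have hD : ∀ r, 0 < r → 0 ≤ D r := fun r hr => by positivity
  have hg0 : ∀ r, 0 < r → 0 ≤ g r := fun r hr => by positivity
  have hQD : ∀ r, 0 < r → Q r ^ 2 ≤ g r * D r := by
    intro r hr
    have h : g r * D r = Q r ^ 2 + g r * (r ^ n * (lam / r ^ 2 * v r ^ 2)) := by
      simp only [g, D, Q]; ring
    rw [h]
    have : 0 ≤ g r * (r ^ n * (lam / r ^ 2 * v r ^ 2)) := by
      have := hg0 r hr
      positivity
    linarith
  have hgM : ∀ R, 0 < R → ∃ M, 0 < M ∧ ∀ r, 0 < r → r ≤ R → g r ≤ M * r := by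
    intro R hR
    obtain ⟨C, hC⟩ := (isCompact_Icc (a := (0 : ℝ)) (b := R)).exists_bound_of_continuousOn
      (hvc.mono Set.Icc_subset_Ici_self)
    refine ⟨(C ^ 2 + 1) * R ^ (n - 1), by positivity, fun r hr hrR => ?_⟩
    have h1 : v r ^ 2 ≤ C ^ 2 + 1 := by
      have := hC r ⟨hr.le, hrR⟩
      rw [Real.norm_eq_abs] at this
      have := sq_le_sq' (by linarith [neg_abs_le (v r)]) ((le_abs_self _).trans this)
      linarith
    have h2 : r ^ n ≤ R ^ (n - 1) * r := by
      obtain ⟨m, rfl⟩ : ∃ m, n = m + 1 := ⟨n - 1, by omega⟩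
      rw [pow_succ]
      simp only [Nat.add_sub_cancel]
      gcongr
    calc g r = v r ^ 2 * r ^ n := rfl
      _ ≤ (C ^ 2 + 1) * (R ^ (n - 1) * r) := by gcongr
      _ = _ := by ring
  have hgc : ContinuousOn g (Set.Ioi 0) :=
    ((hvc.mono Set.Ioi_subset_Ici_self).pow 2).mul (continuous_pow n).continuousOn
  have hgi : IntegrableOn g (Set.Ioi 0) := by
    refine Integrable.mono hint (hgc.aestronglyMeasurable measurableSet_Ioi) ?_
    refine (ae_restrict_iff' measurableSet_Ioi).2 (Eventually.of_forall fun r hr => ?_)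
    have hr : 0 < r := hr
    rw [Real.norm_of_nonneg (hg0 r hr), Real.norm_of_nonneg (by positivity)]
    simp only [g]
    gcongr
    nlinarith [sq_nonneg (deriv v r)]
  have hz := absA Q D g hQ hD hg0 hQD hgM hgc hgi
  have hvz : ∀ r, 0 < r → v r = 0 := by
    intro r hr
    have h1 : Q =ᶠ[𝓝 r] fun _ => 0 := by
      filter_upwards [Ioi_mem_nhds hr] with s hs using hz s hs
    have h2 : D r = 0 := by
      rw [← (hQ r hr).deriv, h1.deriv_eq]
      simp
    by_contra hne
    have : 0 < D r := by
      have : 0 < v r ^ 2 := by positivity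
      simp only [D]
      positivity
    linarith
  intro r hr
  rcases hr.lt_or_eq with h | h
  · exact hvz r h
  · subst h
    have h1 : Tendsto v (𝓝[>] 0) (𝓝 (v 0)) :=
      ((hvc 0 Set.self_mem_Ici).mono Set.Ioi_subset_Ici_self)
    have h2 : Tendsto v (𝓝[>] 0) (𝓝 0) := by
      refine tendsto_const_nhds.congr' ?_
      filter_upwards [self_mem_nhdsWithin] with s hs using (hvz s hs).symm
    exact tendsto_nhds_unique h1 h2


end
end
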